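/- arXiv:2004.01529 — 4 statements merged into one kernel-verified Lean document; each statement's English description precedes it below -/
import Mathlib

section
/- Let k ≥ 2, r ≥ 0 and t ≥ 2 be fixed integers, let C_s = 2^{2^{s−1}−1} · 10^{2^{s+2}−2} · (k² t⁴ (r+1)⁷)^{2^{s−1}}, let n ≥ C_1·(3t·C_t)^{2t}, and let δ ∈ [60k²(r+1)⁶t⁴/C_1, 1 − 60k²(r+1)⁶t⁴/C_1] ∪ {1}. Let F ⊆ C([n],k) have size |F| = Σ_{i=t}^{t+r−1} C(n−i, k−t) + δ·C(n−(t+r), k−t) and satisfy I(F) = MI(F). If F contains at most one full t-star, then there exists a subset U ⊆ [n] with |U| ≤ t(4r+5) that is a t-cover of F, i.e. |F ∩ U| ≥ t for every F ∈ F. -/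
open Finset

/-- The total intersection of a family: `I(F) = ∑_{A∈F} ∑_{B∈F} |A ∩ B|`. -/
def totalInt (F : Finset (Finset ℕ)) : ℕ :=
  ∑ A ∈ F, ∑ B ∈ F, (A ∩ B).card

/-- The degree of a set `S` in the family `F`: the number of members of `F` containing `S`. -/
def degF (F : Finset (Finset ℕ)) (S : Finset ℕ) : ℕ :=
  (F.filter fun A => S ⊆ A).card

/-- `A` strictly precedes `B` in the lexicographic order on finite sets of positive integers:
the minimal element of the symmetric difference `A Δ B` belongs to `A`. -/
def lexLt (A B : Finset ℕ) : Prop :=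
  ∃ m ∈ A \ B, ∀ x ∈ (A \ B) ∪ (B \ A), m ≤ x

/-- `S` is an initial segment (prefix) of the `k`-element subsets of `[n] = {1,…,n}`
under the lexicographic order. -/
def IsLexPrefix (n k : ℕ) (S : Finset (Finset ℕ)) : Prop :=
  S ⊆ (Icc 1 n).powersetCard k ∧
    ∀ A ∈ S, ∀ B ∈ (Icc 1 n).powersetCard k, lexLt B A → B ∈ S

/-- The cardinality of the family `L_{n,k,t}^{(r)}`:
`C(n−t+1, k−t+1) − C(n−(t+r−1), k−t+1)`. -/
def lexStarCard (n k t r : ℕ) : ℕ :=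
  (n - t + 1).choose (k - t + 1) - (n - (t + r - 1)).choose (k - t + 1)

/-- The full `t`-star with core `Y`: all `k`-subsets of `[n]` containing `Y`. -/
def fullStar (n k : ℕ) (Y : Finset ℕ) : Finset (Finset ℕ) :=
  ((Icc 1 n).powersetCard k).filter fun A => Y ⊆ A

/-- The constant `C_s = 2^{2^{s−1}−1} · 10^{2^{s+2}−2} · (k² t⁴ (r+1)⁷)^{2^{s−1}}`. -/
def Cconst (k t r s : ℕ) : ℕ :=
  2 ^ (2 ^ (s - 1) - 1) * 10 ^ (2 ^ (s + 2) - 2) * (k ^ 2 * t ^ 4 * (r + 1) ^ 7) ^ (2 ^ (s - 1))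

/-- degree of a vertex -/
def dg (F : Finset (Finset ℕ)) (x : ℕ) : ℕ := (F.filter fun A => x ∈ A).card

/-- total intersection of a set with the family -/
def sg (F : Finset (Finset ℕ)) (Z : Finset ℕ) : ℕ := ∑ B ∈ F, (Z ∩ B).card

lemma totalInt_eq (F : Finset (Finset ℕ)) : totalInt F = ∑ A ∈ F, sg F A := rfl

lemma sg_eq (F : Finset (Finset ℕ)) (Z : Finset ℕ) : sg F Z = ∑ x ∈ Z, dg F x := by
  unfold sg dg
  simp_rw [card_filter]
  rw [sum_comm]
  refine sum_congr rfl fun B _ => ?_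
  rw [← card_filter, filter_mem_eq_inter]

lemma dg_le (F : Finset (Finset ℕ)) (x : ℕ) : dg F x ≤ F.card := card_filter_le _ _

lemma sg_mono (F : Finset (Finset ℕ)) {Y Z : Finset ℕ} (h : Y ⊆ Z) : sg F Y ≤ sg F Z := by
  unfold sg
  exact sum_le_sum fun B _ => card_le_card (inter_subset_inter_right h)

lemma totalInt_insert (F : Finset (Finset ℕ)) (A : Finset ℕ) (h : A ∉ F) :
    totalInt (insert A F) = totalInt F + 2 * sg F A + A.card := by
  unfold totalInt sg
  rw [sum_insert h, sum_insert h]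
  have : ∀ B ∈ F, ∑ C ∈ insert A F, (B ∩ C).card = (A ∩ B).card + ∑ C ∈ F, (B ∩ C).card := by
    intro B _
    rw [sum_insert h, inter_comm]
  rw [sum_congr rfl this, sum_add_distrib, inter_self]
  ring

lemma exchange {n k : ℕ} {F : Finset (Finset ℕ)} (hF : F ⊆ (Icc 1 n).powersetCard k)
    (hopt : ∀ G ⊆ (Icc 1 n).powersetCard k, G.card = F.card → totalInt G ≤ totalInt F)
    {A B : Finset ℕ} (hA : A ∈ F) (hB : B ∈ (Icc 1 n).powersetCard k) (hBF : B ∉ F) :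
    sg F B ≤ sg F A := by
  have hA' : A ∉ F.erase A := by simp
  have hB' : B ∉ F.erase A := fun h => hBF (mem_of_mem_erase h)
  have h1 := hopt (insert B (F.erase A)) (by
    intro x hx
    rcases mem_insert.1 hx with rfl | hx
    · exact hB
    · exact hF (mem_of_mem_erase hx)) (by
    rw [card_insert_of_notMem hB', card_erase_add_one hA])
  rw [totalInt_insert _ _ hB'] at h1
  have h2 := totalInt_insert _ _ hA'
  rw [insert_erase hA] at h2
  have hkA := (mem_powersetCard.1 (hF hA)).2
  have hkB := (mem_powersetCard.1 hB).2
  have h3 : sg F A = sg (F.erase A) A + k := by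
    unfold sg
    rw [← sum_erase_add _ _ hA, inter_self, hkA]
  have h4 : sg F B ≤ sg (F.erase A) B + k := by
    unfold sg
    rw [← sum_erase_add _ _ hA]
    have : (B ∩ A).card ≤ k := by
      rw [← hkA]; exact card_le_card inter_subset_right
    omega
  omega

lemma top_sel {α : Type*} [DecidableEq α] (X : Finset α) (w : α → ℝ) (q : ℕ) (hq : q ≤ X.card) :
    ∃ S ⊆ X, S.card = q ∧ ∀ x ∈ S, ∀ y ∈ X \ S, w y ≤ w x := by
  induction q with
  | zero => exact ⟨∅, by simp, by simp, by simp⟩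
  | succ q ih =>
    obtain ⟨S, hS, hc, h⟩ := ih (by omega)
    have hne : (X \ S).Nonempty := by
      rw [← card_pos, card_sdiff_of_subset hS]; omega
    obtain ⟨y, hy, hmax⟩ := exists_max_image (X \ S) w hne
    have hy' := mem_sdiff.1 hy
    refine ⟨insert y S, insert_subset hy'.1 hS, by rw [card_insert_of_notMem hy'.2, hc], ?_⟩
    intro x hx z hz
    have hz' : z ∈ X \ S := by
      simp only [mem_sdiff, mem_insert, not_or] at hz ⊢
      exact ⟨hz.1, hz.2.2⟩
    rcases mem_insert.1 hx with rfl | hx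
    · exact hmax z hz'
    · exact h x hx z hz'

lemma stability {α : Type*} [DecidableEq α] (X : Finset α) (w : α → ℝ) (r : ℕ) (δ e Q : ℝ)
    (hδ0 : 0 < δ) (hδ1 : δ ≤ 1) (hw0 : ∀ x ∈ X, 0 ≤ w x) (hw1 : ∀ x ∈ X, w x ≤ 1)
    (hQ : Q ≤ r + δ) (hs : ∑ x ∈ X, w x ≤ Q) (h2 : r + δ ^ 2 - e ≤ ∑ x ∈ X, w x ^ 2) :
    ∃ S ⊆ X, S.card ≤ r + 1 ∧ δ * (Q - ∑ x ∈ S, w x) ≤ e := by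
  by_cases hX : X.card ≤ r
  · refine ⟨X, Subset.rfl, by omega, ?_⟩
    have h3 : ∑ x ∈ X, w x ^ 2 ≤ ∑ x ∈ X, w x :=
      sum_le_sum fun x hx => by nlinarith [hw0 x hx, hw1 x hx]
    have h4 : ∑ x ∈ X, w x ≤ r := by
      calc ∑ x ∈ X, w x ≤ ∑ x ∈ X, (1 : ℝ) := sum_le_sum hw1
        _ = X.card := by simp
        _ ≤ r := by exact_mod_cast hX
    nlinarith
  · obtain ⟨S, hS, hc, h⟩ := top_sel X w r (by omega)
    have hne : (X \ S).Nonempty := by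
      rw [← card_pos, card_sdiff_of_subset hS]; omega
    obtain ⟨y, hy, hmax⟩ := exists_max_image (X \ S) w hne
    have hy' := mem_sdiff.1 hy
    refine ⟨insert y S, insert_subset hy'.1 hS, by rw [card_insert_of_notMem hy'.2, hc], ?_⟩
    rw [sum_insert hy'.2]
    have hb0 := hw0 y hy'.1
    have hb1 := hw1 y hy'.1
    have e1 : ∑ x ∈ X, w x ^ 2 = ∑ x ∈ X \ S, w x ^ 2 + ∑ x ∈ S, w x ^ 2 := (sum_sdiff hS).symm
    have e2 : ∑ x ∈ X, w x = ∑ x ∈ X \ S, w x + ∑ x ∈ S, w x := (sum_sdiff hS).symm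
    have e3 : ∑ x ∈ X \ S, w x ^ 2 ≤ w y * ∑ x ∈ X \ S, w x := by
      rw [mul_sum]
      refine sum_le_sum fun x hx => ?_
      have := hmax x hx
      have := hw0 x (mem_sdiff.1 hx).1
      nlinarith
    have e4 : ∑ x ∈ S, w x ^ 2 ≤ ∑ x ∈ S, (w x - w y * (1 - w x)) := by
      refine sum_le_sum fun x hx => ?_
      have := h x hx y hy
      have := hw1 x (hS hx)
      nlinarith
    have e5 : ∑ x ∈ S, (w x - w y * (1 - w x)) = ∑ x ∈ S, w x - w y * (r - ∑ x ∈ S, w x) := by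
      rw [sum_sub_distrib, ← mul_sum, sum_sub_distrib]
      simp [hc]
    have e6 : ∑ x ∈ S, w x ≤ r := by
      calc ∑ x ∈ S, w x ≤ ∑ x ∈ S, (1 : ℝ) := sum_le_sum fun x hx => hw1 x (hS hx)
        _ = r := by simp [hc]
    set p := ∑ x ∈ S, w x
    set u := ∑ x ∈ X \ S, w x
    set b := w y
    have f1 : b * u ≤ b * (Q - p) := mul_le_mul_of_nonneg_left (by linarith) hb0
    have f2 : b * (Q - p) ≤ b * (r + δ - p) := mul_le_mul_of_nonneg_left (by linarith) hb0
    have f3 : r - p ≤ b * δ - δ ^ 2 + e := by nlinarith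
    have f4 : δ * Q ≤ δ * (r + δ) := mul_le_mul_of_nonneg_left hQ hδ0.le
    nlinarith

lemma ind_sq {ι : Type*} (F : Finset (Finset ℕ)) (J : Finset ι) (p : ι → Finset ℕ → Prop)
    [∀ j A, Decidable (p j A)] :
    ∑ A ∈ F, ∑ B ∈ F, (J.filter fun j => p j A ∧ p j B).card
      = ∑ j ∈ J, (F.filter (p j)).card ^ 2 := by
  have h1 : ∀ A ∈ F, ∑ B ∈ F, (J.filter fun j => p j A ∧ p j B).card
      = ∑ j ∈ J, (if p j A then 1 else 0) * (F.filter (p j)).card := by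
    intro A _
    simp_rw [card_filter]
    rw [sum_comm]
    refine sum_congr rfl fun j _ => ?_
    rw [mul_sum]
    refine sum_congr rfl fun B _ => ?_
    by_cases h : p j A <;> simp [h]
  rw [sum_congr rfl h1, sum_comm]
  refine sum_congr rfl fun j _ => ?_
  rw [← sum_mul, sq, ← card_filter]

/-- the `j`-th block of the lexicographic family -/
def lexBlock (n k t j : ℕ) : Finset (Finset ℕ) :=
  ((Icc 1 n).powersetCard k).filter fun A =>
    insert (t + j) (Icc 1 (t - 1)) ⊆ A ∧ ∀ i ∈ Ico t (t + j), i ∉ A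

lemma lexBlock_card (n k t j : ℕ) (ht : 1 ≤ t) (htk : t ≤ k) (hn : t + j ≤ n) :
    (n - (t + j)).choose (k - t) ≤ (lexBlock n k t j).card := by
  have h0 : ((Icc (t + j + 1) n).powersetCard (k - t)).card = (n - (t + j)).choose (k - t) := by
    rw [card_powersetCard, Nat.card_Icc]
    congr 1
    omega
  rw [← h0]
  refine card_le_card_of_injOn (fun P => insert (t + j) (Icc 1 (t - 1)) ∪ P) ?_ ?_
  · intro P hP
    have hP' := mem_powersetCard.1 (mem_coe.1 hP)
    have hmem : ∀ x ∈ P, t + j + 1 ≤ x ∧ x ≤ n := fun x hx => mem_Icc.1 (hP'.1 hx)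
    have hdisj : Disjoint (insert (t + j) (Icc 1 (t - 1))) P := by
      rw [disjoint_left]
      intro x hx hxP
      have := hmem x hxP
      simp only [mem_insert, mem_Icc] at hx
      omega
    simp only [lexBlock, coe_filter, Set.mem_ofPred_eq, mem_powersetCard]
    refine ⟨⟨?_, ?_⟩, subset_union_left, ?_⟩
    · intro x hx
      rw [mem_Icc]
      rcases mem_union.1 hx with hx | hx
      · simp only [mem_insert, mem_Icc] at hx
        omega
      · have := hmem x hx
        omega
    · rw [card_union_of_disjoint hdisj, card_insert_of_notMem (by simp; omega), hP'.2, Nat.card_Icc]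
      omega
    · intro i hi hmi
      rw [mem_Ico] at hi
      rcases mem_union.1 hmi with hx | hx
      · simp only [mem_insert, mem_Icc] at hx
        omega
      · have := hmem i hx
        omega
  · intro P hP P' hP' heq
    have key : ∀ Q ∈ (Icc (t + j + 1) n).powersetCard (k - t),
        (insert (t + j) (Icc 1 (t - 1)) ∪ Q).filter (fun x => t + j < x) = Q := by
      intro Q hQ
      have hQ' := (mem_powersetCard.1 hQ).1
      ext x
      simp only [mem_filter, mem_union, mem_insert, mem_Icc]
      constructor
      · rintro ⟨h | h, h2⟩
        · omega
        · exact h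
      · intro h
        have := mem_Icc.1 (hQ' h)
        exact ⟨Or.inr h, by omega⟩
    rw [← key P hP, ← key P' hP']
    simp only at heq
    rw [heq]

lemma lex_family (n k t r : ℕ) (ht : 1 ≤ t) (htk : t ≤ k) (hn : t + r ≤ n) (c : ℕ → ℕ)
    (hc : ∀ j ∈ range (r + 1), c j ≤ (n - (t + j)).choose (k - t)) :
    ∃ G ⊆ (Icc 1 n).powersetCard k, G.card = ∑ j ∈ range (r + 1), c j ∧
      (t - 1) * G.card ^ 2 + ∑ j ∈ range (r + 1), c j ^ 2 ≤ totalInt G := by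
  have h1 : ∀ j, ∃ g ⊆ lexBlock n k t j, j ∈ range (r + 1) → g.card = c j := by
    intro j
    by_cases hj : j ∈ range (r + 1)
    · have hj' := mem_range.1 hj
      obtain ⟨g, hg, hgc⟩ := exists_subset_card_eq
        ((hc j hj).trans (lexBlock_card n k t j ht htk (by omega)))
      exact ⟨g, hg, fun _ => hgc⟩
    · exact ⟨∅, by simp, fun h => absurd h hj⟩
  choose g hg hgc using h1
  have hdis : ∀ i j A, A ∈ g i → A ∈ g j → i = j := by
    have : ∀ i j A, A ∈ g i → A ∈ g j → ¬ i < j := by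
      intro i j A hi hj hlt
      have hi' := (mem_filter.1 (hg i hi)).2.1
      have hj' := (mem_filter.1 (hg j hj)).2.2
      exact hj' (t + i) (mem_Ico.2 ⟨by omega, by omega⟩) (hi' (mem_insert_self _ _))
    intro i j A hi hj
    have h1 := this i j A hi hj
    have h2 := this j i A hj hi
    omega
  set G := (range (r + 1)).biUnion g with hG
  have hcard : G.card = ∑ j ∈ range (r + 1), c j := by
    rw [hG, card_biUnion]
    · exact sum_congr rfl fun j hj => hgc j hj
    · intro i _ j _ hij
      rw [Function.onFun, disjoint_left]
      intro A hi hj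
      exact hij (hdis i j A hi hj)
  refine ⟨G, ?_, hcard, ?_⟩
  · intro A hA
    obtain ⟨j, _, hj⟩ := mem_biUnion.1 hA
    exact (mem_filter.1 (hg j hj)).1
  · have hsum := ind_sq G (range (r + 1)) (fun j A => A ∈ g j)
    have hfil : ∑ j ∈ range (r + 1), (G.filter (fun A => A ∈ g j)).card ^ 2
        = ∑ j ∈ range (r + 1), c j ^ 2 := by
      refine sum_congr rfl fun j hj => ?_
      rw [← hgc j hj]
      congr 2
      ext A
      simp only [mem_filter]
      exact ⟨fun h => h.2, fun h => ⟨mem_biUnion.2 ⟨j, hj, h⟩, h⟩⟩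
    rw [hfil] at hsum
    have hconst : (t - 1) * G.card ^ 2 = ∑ A ∈ G, ∑ B ∈ G, (t - 1) := by
      simp only [sum_const, smul_eq_mul]; ring
    rw [← hsum, hconst, ← sum_add_distrib]
    unfold totalInt
    refine sum_le_sum fun A hA => ?_
    rw [← sum_add_distrib]
    refine sum_le_sum fun B hB => ?_
    have base : ∀ A ∈ G, Icc 1 (t - 1) ⊆ A := by
      intro A hA
      obtain ⟨j, _, hj⟩ := mem_biUnion.1 hA
      exact (subset_insert _ _).trans (mem_filter.1 (hg j hj)).2.1
    rcases (filter (fun j => A ∈ g j ∧ B ∈ g j) (range (r + 1))).eq_empty_or_nonempty with he | ⟨j, hj⟩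
    · rw [he, card_empty, add_zero]
      have := card_le_card (subset_inter (base A hA) (base B hB))
      simpa using this
    · have hj' := (mem_filter.1 hj).2
      have hle : (filter (fun j => A ∈ g j ∧ B ∈ g j) (range (r + 1))).card ≤ 1 := by
        rw [card_le_one]
        intro a ha b hb
        exact hdis a b A (mem_filter.1 ha).2.1 (mem_filter.1 hb).2.1
      have := card_le_card (subset_inter (mem_filter.1 (hg j hj'.1)).2.1 (mem_filter.1 (hg j hj'.2)).2.1)
      rw [card_insert_of_notMem (by simp; omega), Nat.card_Icc] at this
      omega

/-- members of `F` meeting `H` in more than `t` points -/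
def bigF (F : Finset (Finset ℕ)) (H : Finset ℕ) (t : ℕ) : Finset (Finset ℕ) :=
  F.filter fun A => t + 1 ≤ (A ∩ H).card

lemma fullStar_card_le (n k : ℕ) (Y : Finset ℕ) (hY : Y ⊆ Icc 1 n) :
    (fullStar n k Y).card ≤ (n - Y.card).choose (k - Y.card) := by
  have h0 : ((Icc 1 n \ Y).powersetCard (k - Y.card)).card = (n - Y.card).choose (k - Y.card) := by
    rw [card_powersetCard, card_sdiff_of_subset hY, Nat.card_Icc]
    simp
  rw [← h0]
  refine card_le_card_of_injOn (fun A => A \ Y) ?_ ?_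
  · intro A hA
    have hA' := mem_filter.1 (mem_coe.1 hA)
    have hA1 := mem_powersetCard.1 hA'.1
    simp only [mem_coe, mem_powersetCard]
    exact ⟨sdiff_subset_sdiff hA1.1 Subset.rfl, by rw [card_sdiff_of_subset hA'.2, hA1.2]⟩
  · intro A hA B hB heq
    have hA' := (mem_filter.1 (mem_coe.1 hA)).2
    have hB' := (mem_filter.1 (mem_coe.1 hB)).2
    simp only at heq
    rw [← sdiff_union_of_subset hA', ← sdiff_union_of_subset hB', heq]

lemma bigF_card {n k t : ℕ} {F : Finset (Finset ℕ)}
    (hF : F ⊆ (Icc 1 n).powersetCard k) (H : Finset ℕ) (hH : H ⊆ Icc 1 n) :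
    (bigF F H t).card ≤ H.card ^ (t + 1) * (n - (t + 1)).choose (k - (t + 1)) := by
  have hsub : bigF F H t ⊆ (H.powersetCard (t + 1)).biUnion (fun Z => fullStar n k Z) := by
    intro A hA
    have hA' := mem_filter.1 hA
    obtain ⟨Z, hZ, hZc⟩ := exists_subset_card_eq hA'.2
    refine mem_biUnion.2 ⟨Z, mem_powersetCard.2 ⟨hZ.trans inter_subset_right, hZc⟩, ?_⟩
    exact mem_filter.2 ⟨hF hA'.1, hZ.trans inter_subset_left⟩
  refine (card_le_card hsub).trans (card_biUnion_le.trans ?_)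
  have : ∀ Z ∈ H.powersetCard (t + 1), (fullStar n k Z).card ≤ (n - (t + 1)).choose (k - (t + 1)) := by
    intro Z hZ
    have hZ' := mem_powersetCard.1 hZ
    have := fullStar_card_le n k Z (hZ'.1.trans hH)
    rwa [hZ'.2] at this
  refine (sum_le_card_nsmul _ _ _ this).trans ?_
  rw [smul_eq_mul, card_powersetCard]
  exact Nat.mul_le_mul_right _ (Nat.choose_le_pow _ _)

lemma sum_sg_H {k : ℕ} (t : ℕ) (ht : 1 ≤ t) {F : Finset (Finset ℕ)} (hF : ∀ A ∈ F, A.card = k) (H : Finset ℕ) :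
    ∑ A ∈ F, sg F (A ∩ H) ≤ (t - 1) * F.card ^ 2
      + ∑ Y ∈ H.powersetCard t, (F.filter fun A => A ∩ H = Y).card ^ 2
      + 2 * k * F.card * (bigF F H t).card := by
  have hsum := ind_sq F (H.powersetCard t) (fun Y A => A ∩ H = Y)
  rw [← hsum]
  have hconst : (t - 1) * F.card ^ 2 = ∑ A ∈ F, ∑ B ∈ F, (t - 1) := by
    simp only [sum_const, smul_eq_mul]; ring
  have hb : 2 * k * F.card * (bigF F H t).card = ∑ A ∈ F, ∑ B ∈ F,
      ((if t + 1 ≤ (A ∩ H).card then k else 0) + (if t + 1 ≤ (B ∩ H).card then k else 0)) := by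
    have : (bigF F H t).card * k = ∑ A ∈ F, (if t + 1 ≤ (A ∩ H).card then k else 0) := by
      rw [← sum_filter, sum_const, smul_eq_mul]; rfl
    simp only [sum_add_distrib, sum_const, smul_eq_mul]
    rw [← mul_sum, ← this]
    ring
  rw [hconst, hb, ← sum_add_distrib, ← sum_add_distrib]
  refine sum_le_sum fun A hA => ?_
  unfold sg
  rw [← sum_add_distrib, ← sum_add_distrib]
  refine sum_le_sum fun B hB => ?_
  have h1 : (A ∩ H ∩ B).card ≤ k := by
    rw [← hF B hB]; exact card_le_card inter_subset_right
  by_cases hA1 : t + 1 ≤ (A ∩ H).card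
  · simp only [hA1, if_true]; omega
  by_cases hB1 : t + 1 ≤ (B ∩ H).card
  · simp only [hB1, if_true]; omega
  have hsA : A ∩ H ∩ B ⊆ A ∩ H := inter_subset_left
  have hsB : A ∩ H ∩ B ⊆ B ∩ H := by
    intro x; simp only [mem_inter]; tauto
  have hcA := card_le_card hsA
  have hcB := card_le_card hsB
  by_cases hlt : (A ∩ H ∩ B).card ≤ t - 1
  · omega
  · have hAeq := eq_of_subset_of_card_le hsA (by omega)
    have hBeq := eq_of_subset_of_card_le hsB (by omega)
    have : 1 ≤ (filter (fun Y => A ∩ H = Y ∧ B ∩ H = Y) (H.powersetCard t)).card := by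
      rw [Nat.one_le_iff_ne_zero, card_ne_zero]
      refine ⟨A ∩ H, ?_⟩
      simp only [mem_filter, mem_powersetCard, true_and]
      exact ⟨⟨inter_subset_right, by omega⟩, by rw [← hBeq, hAeq]⟩
    omega

lemma choose_drop (a b j : ℕ) (h : j ≤ a) :
    a.choose (b + 1) ≤ (a - j).choose (b + 1) + j * (a - 1).choose b := by
  induction j with
  | zero => simp
  | succ j ih =>
    have ih := ih (by omega)
    obtain ⟨c, hc⟩ : ∃ c, a - j = c + 1 := ⟨a - j - 1, by omega⟩
    have hc' : a - (j + 1) = c := by omega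
    rw [hc, Nat.choose_succ_succ] at ih
    rw [hc']
    have : c.choose b ≤ (a - 1).choose b := Nat.choose_le_choose _ (by omega)
    rw [add_mul, one_mul]
    simp only [Nat.succ_eq_add_one] at ih
    omega

lemma low (k r t n : ℕ) (ht : 2 ≤ t) (htk : t < k) (hn : t + r ≤ n)
    (δ : ℝ) (hδ0 : 0 ≤ δ) (hδ1 : δ ≤ 1)
    (F : Finset (Finset ℕ))
    (hcard : (F.card : ℝ) =
      (∑ i ∈ Icc t (t + r - 1), ((n - i).choose (k - t) : ℝ)) +
        δ * ((n - (t + r)).choose (k - t) : ℝ))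
    (hopt : ∀ G ⊆ (Icc 1 n).powersetCard k, G.card = F.card → totalInt G ≤ totalInt F) :
    (F.card : ℝ) ≤ (r + δ) * ((n - t).choose (k - t) : ℝ) ∧
    ((t : ℝ) - 1) * (F.card : ℝ) ^ 2 + ((n - t).choose (k - t) : ℝ) ^ 2 * (r + δ ^ 2)
      - 2 * ((r : ℝ) + 1) ^ 2 * ((n - t).choose (k - t) : ℝ)
        * ((n - (t + 1)).choose (k - (t + 1)) : ℝ) ≤ totalInt F := by
  have hIcc : ∑ i ∈ Icc t (t + r - 1), ((n - i).choose (k - t) : ℝ)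
      = ∑ j ∈ range r, ((n - (t + j)).choose (k - t) : ℝ) := by
    have : Icc t (t + r - 1) = Ico t (t + r) := by
      ext x; simp only [mem_Icc, mem_Ico]; omega
    rw [this, sum_Ico_eq_sum_range]
    simp
  rw [hIcc] at hcard
  set N : ℝ := ((n - t).choose (k - t) : ℝ) with hN
  set Q : ℝ := ((n - (t + 1)).choose (k - (t + 1)) : ℝ) with hQ
  have hN0 : 0 ≤ N := Nat.cast_nonneg _
  have hQ0 : 0 ≤ Q := Nat.cast_nonneg _
  have hKup : ∀ j, ((n - (t + j)).choose (k - t) : ℝ) ≤ N := by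
    intro j
    rw [hN]
    exact_mod_cast Nat.choose_le_choose _ (by omega)
  have hKlo : ∀ j ≤ r, N - r * Q ≤ ((n - (t + j)).choose (k - t) : ℝ) := by
    intro j hj
    have h1 := choose_drop (n - t) (k - (t + 1)) j (by omega)
    have e1 : k - (t + 1) + 1 = k - t := by omega
    have e2 : n - t - j = n - (t + j) := by omega
    have e3 : n - t - 1 = n - (t + 1) := by omega
    rw [e1, e2, e3] at h1
    have h2 : N ≤ ((n - (t + j)).choose (k - t) : ℝ) + j * Q := by
      rw [hN, hQ]; exact_mod_cast h1
    have h3 : (j : ℝ) * Q ≤ r * Q := mul_le_mul_of_nonneg_right (by exact_mod_cast hj) hQ0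
    linarith
  have hKsq : ∀ j ≤ r, N ^ 2 - 2 * r * Q * N ≤ ((n - (t + j)).choose (k - t) : ℝ) ^ 2 := by
    intro j hj
    have := hKlo j hj
    nlinarith [sq_nonneg (((n - (t + j)).choose (k - t) : ℝ) - N)]
  constructor
  · rw [hcard]
    have h1 : ∑ j ∈ range r, ((n - (t + j)).choose (k - t) : ℝ) ≤ r * N := by
      calc _ ≤ ∑ j ∈ range r, N := sum_le_sum fun j _ => hKup j
        _ = r * N := by simp
    have h2 : δ * ((n - (t + r)).choose (k - t) : ℝ) ≤ δ * N :=
      mul_le_mul_of_nonneg_left (hKup r) hδ0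
    linarith
  · set Kn : ℕ := ∑ j ∈ range r, (n - (t + j)).choose (k - t) with hKn
    have hKnr : (Kn : ℝ) = ∑ j ∈ range r, ((n - (t + j)).choose (k - t) : ℝ) := by
      rw [hKn]; push_cast; rfl
    have hc0 : (0 : ℝ) ≤ ((n - (t + r)).choose (k - t) : ℝ) := Nat.cast_nonneg _
    have hle : Kn ≤ F.card := by
      have : (Kn : ℝ) ≤ F.card := by rw [hcard, hKnr]; nlinarith
      exact_mod_cast this
    obtain ⟨c, hc⟩ := Nat.exists_eq_add_of_le hle
    have hcr : (c : ℝ) = δ * ((n - (t + r)).choose (k - t) : ℝ) := by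
      have : (F.card : ℝ) = Kn + c := by exact_mod_cast hc
      linarith
    have hcle : c ≤ (n - (t + r)).choose (k - t) := by
      have : (c : ℝ) ≤ ((n - (t + r)).choose (k - t) : ℝ) := by rw [hcr]; nlinarith
      exact_mod_cast this
    obtain ⟨G, hG, hGc, hGI⟩ := lex_family n k t r (by omega) htk.le hn
      (fun j => if j < r then (n - (t + j)).choose (k - t) else c) (by
        intro j hj
        have := mem_range.1 hj
        by_cases h : j < r
        · simp [h]
        · have : j = r := by omega
          subst this
          simpa using hcle)
    have hsum : ∀ p : ℕ, ∑ j ∈ range (r + 1), (if j < r then (n - (t + j)).choose (k - t) else c) ^ p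
        = ∑ j ∈ range r, ((n - (t + j)).choose (k - t)) ^ p + c ^ p := by
      intro p
      rw [sum_range_succ]
      congr 1
      · refine sum_congr rfl fun j hj => ?_
        rw [if_pos (mem_range.1 hj)]
      · simp
    have hGF : G.card = F.card := by
      have := hsum 1
      simp only [pow_one] at this
      rw [hGc, this, hc]
    have hI := hopt G hG hGF
    rw [hsum 2, hGF] at hGI
    have hI2 : (((t - 1 : ℕ) : ℝ)) * (F.card : ℝ) ^ 2
        + (∑ j ∈ range r, ((n - (t + j)).choose (k - t) : ℝ) ^ 2 + (c : ℝ) ^ 2) ≤ totalInt F := by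
      exact_mod_cast hGI.trans hI
    rw [Nat.cast_sub (by omega : 1 ≤ t), Nat.cast_one] at hI2
    have h1 : r * (N ^ 2 - 2 * r * Q * N) ≤ ∑ j ∈ range r, ((n - (t + j)).choose (k - t) : ℝ) ^ 2 := by
      calc r * (N ^ 2 - 2 * r * Q * N) = ∑ j ∈ range r, (N ^ 2 - 2 * r * Q * N) := by rw [sum_const, card_range, nsmul_eq_mul]
        _ ≤ _ := sum_le_sum fun j hj => hKsq j (mem_range.1 hj).le
    have h2 : δ ^ 2 * (N ^ 2 - 2 * r * Q * N) ≤ (c : ℝ) ^ 2 := by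
      rw [hcr, mul_pow]
      exact mul_le_mul_of_nonneg_left (hKsq r le_rfl) (sq_nonneg _)
    have hδ2 : δ ^ 2 ≤ 1 := by nlinarith
    have hQN : 0 ≤ Q * N := mul_nonneg hQ0 hN0
    have hr0 : (0 : ℝ) ≤ r := Nat.cast_nonneg _
    have h3 : (r + δ ^ 2) * (2 * r * (Q * N)) ≤ (r + 1) * (2 * (r + 1) * (Q * N)) := by
      apply mul_le_mul
      · linarith
      · nlinarith
      · positivity
      · positivity
    nlinarith

lemma sg_split (F : Finset (Finset ℕ)) (A U : Finset ℕ) (D : ℝ)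
    (h : ∀ x ∈ A \ U, (dg F x : ℝ) ≤ D) (hD : 0 ≤ D) :
    (sg F A : ℝ) ≤ sg F (A ∩ U) + A.card * D := by
  have h1 : sg F A = sg F (A \ U) + sg F (A ∩ U) := by
    rw [sg_eq, sg_eq, sg_eq, ← sum_union (disjoint_sdiff_inter A U), sdiff_union_inter]
  have h2 : (sg F (A \ U) : ℝ) ≤ A.card * D := by
    rw [sg_eq]
    push_cast
    calc ∑ x ∈ A \ U, (dg F x : ℝ) ≤ ∑ x ∈ A \ U, D := sum_le_sum h
      _ = (A \ U).card * D := by simp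
      _ ≤ A.card * D := mul_le_mul_of_nonneg_right
          (by exact_mod_cast card_le_card sdiff_subset) hD
  rw [h1]
  push_cast
  linarith

lemma sg_le_card (F : Finset (Finset ℕ)) (Z : Finset ℕ) : sg F Z ≤ Z.card * F.card := by
  rw [sg_eq]
  exact sum_le_card_nsmul _ _ _ fun x _ => dg_le F x

lemma sg_le_star (F : Finset (Finset ℕ)) (Y : Finset ℕ) (t : ℕ) (ht : 1 ≤ t) (hY : Y.card = t) :
    sg F Y ≤ (t - 1) * F.card + (F.filter fun A => Y ⊆ A).card := by
  unfold sg
  rw [card_filter, mul_comm, ← smul_eq_mul, ← sum_const, ← sum_add_distrib]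
  refine sum_le_sum fun B _ => ?_
  by_cases h : Y ⊆ B
  · rw [if_pos h]
    have := card_le_card (inter_subset_left : Y ∩ B ⊆ Y)
    omega
  · rw [if_neg h]
    have : (Y ∩ B).card < Y.card := by
      refine card_lt_card ⟨inter_subset_left, fun h' => h (h'.trans inter_subset_right)⟩
    omega

lemma high {n k t : ℕ} (ht : 1 ≤ t) {F : Finset (Finset ℕ)} (hF : F ⊆ (Icc 1 n).powersetCard k)
    (H : Finset ℕ) (D : ℝ) (hD : 0 ≤ D) (h : ∀ x ∈ Icc 1 n \ H, (dg F x : ℝ) ≤ D) :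
    (totalInt F : ℝ) ≤ ((t : ℝ) - 1) * (F.card : ℝ) ^ 2
      + ∑ Y ∈ H.powersetCard t, ((F.filter fun A => A ∩ H = Y).card : ℝ) ^ 2
      + 2 * k * F.card * (bigF F H t).card + k * D * F.card := by
  have h1 := sum_sg_H t ht (fun A hA => (mem_powersetCard.1 (hF hA)).2) H
  have h2 : ((∑ A ∈ F, sg F (A ∩ H) : ℕ) : ℝ) ≤ ((t - 1 : ℕ) : ℝ) * (F.card : ℝ) ^ 2
      + ∑ Y ∈ H.powersetCard t, ((F.filter fun A => A ∩ H = Y).card : ℝ) ^ 2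
      + 2 * k * F.card * (bigF F H t).card := by exact_mod_cast h1
  rw [Nat.cast_sub ht, Nat.cast_one] at h2
  have h3 : (totalInt F : ℝ) ≤ ((∑ A ∈ F, sg F (A ∩ H) : ℕ) : ℝ) + k * D * F.card := by
    rw [totalInt_eq]
    push_cast
    calc ∑ A ∈ F, (sg F A : ℝ) ≤ ∑ A ∈ F, ((sg F (A ∩ H) : ℝ) + k * D) := by
          refine sum_le_sum fun A hA => ?_
          have hA' := mem_powersetCard.1 (hF hA)
          rw [← hA'.2]
          exact sg_split F A H D (fun x hx => h x (sdiff_subset_sdiff hA'.1 Subset.rfl hx)) hD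
      _ = _ := by rw [sum_add_distrib]; simp; ring
  linarith

lemma final_count {n k t r : ℕ} (ht : 1 ≤ t) {F : Finset (Finset ℕ)}
    (hF : F ⊆ (Icc 1 n).powersetCard k)
    (hopt : ∀ G ⊆ (Icc 1 n).powersetCard k, G.card = F.card → totalInt G ≤ totalInt F)
    (hatmostone : ∀ Y1 Y2 : Finset ℕ, Y1 ∈ (Icc 1 n).powersetCard t →
      Y2 ∈ (Icc 1 n).powersetCard t → fullStar n k Y1 ⊆ F → fullStar n k Y2 ⊆ F → Y1 = Y2)
    (hr : r = 0 → ∀ Y ∈ (Icc 1 n).powersetCard t, ¬ fullStar n k Y ⊆ F)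
    (H U : Finset ℕ) (hU : U ⊆ H)
    (D : ℝ) (hD : 0 ≤ D) (h : ∀ x ∈ Icc 1 n \ U, (dg F x : ℝ) ≤ D)
    (A₀ : Finset ℕ) (hA₀ : A₀ ∈ F) (hA₀U : (A₀ ∩ U).card < t) :
    (totalInt F : ℝ) ≤ ((t : ℝ) - 1) * (F.card : ℝ) ^ 2 + 2 * k * D * F.card
      + k * F.card * (bigF F H t).card + r * ((n - t).choose (k - t) : ℝ) ^ 2 := by
  classical
  set N : ℝ := ((n - t).choose (k - t) : ℝ) with hN
  obtain ⟨P, hP⟩ : ∃ P : Finset ℕ → Prop, ∀ A, P A ↔ ∃ Y ∈ (Icc 1 n).powersetCard t, fullStar n k Y ⊆ F ∧ Y ⊆ A :=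
    ⟨_, fun _ => Iff.rfl⟩
  set Full := F.filter P with hFull
  have hN0 : 0 ≤ N := Nat.cast_nonneg _
  have hstar : ∀ Y ∈ (Icc 1 n).powersetCard t, ((F.filter fun A => Y ⊆ A).card : ℝ) ≤ N := by
    intro Y hY
    have hY' := mem_powersetCard.1 hY
    have h1 := fullStar_card_le n k Y hY'.1
    rw [hY'.2] at h1
    rw [hN]
    have h2 : (F.filter fun A => Y ⊆ A).card ≤ (fullStar n k Y).card :=
      card_le_card (filter_subset_filter _ hF)
    exact_mod_cast h2.trans h1
  have hFullc : (Full.card : ℝ) * N ≤ r * N ^ 2 := by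
    rcases Nat.eq_zero_or_pos r with h0 | h0
    · have : Full = ∅ := by
        rw [hFull, filter_eq_empty_iff]
        intro A _ hPA
        obtain ⟨Y, hY, hYF, _⟩ := (hP A).1 hPA
        exact hr h0 Y hY hYF
      rw [this, h0]; simp
    · have h1 : (Full.card : ℝ) ≤ N := by
        rcases Full.eq_empty_or_nonempty with he | ⟨A, hA⟩
        · rw [he]; simpa using hN0
        · obtain ⟨Y, hY, hYF, _⟩ := (hP A).1 (mem_filter.1 hA).2
          refine le_trans ?_ (hstar Y hY)
          have : Full ⊆ F.filter fun A => Y ⊆ A := by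
            intro B hB
            obtain ⟨Y', hY', hYF', hs⟩ := (hP B).1 (mem_filter.1 hB).2
            rw [hatmostone Y Y' hY hY' hYF hYF']
            exact mem_filter.2 ⟨(mem_filter.1 hB).1, hs⟩
          exact_mod_cast card_le_card this
      have h2 : (1 : ℝ) ≤ r := by exact_mod_cast h0
      nlinarith
  have hM0 : (0 : ℝ) ≤ F.card := Nat.cast_nonneg _
  have hkD : 0 ≤ k * D := by positivity
  have hsplit : ∀ A ∈ F, (sg F A : ℝ) ≤ sg F (A ∩ U) + k * D := by
    intro A hA
    have hA' := mem_powersetCard.1 (hF hA)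
    rw [← hA'.2]
    exact sg_split F A U D (fun x hx => h x (sdiff_subset_sdiff hA'.1 Subset.rfl hx)) hD
  have hsmall : ∀ A ∈ F, (A ∩ U).card < t → (sg F A : ℝ) ≤ (t - 1) * F.card + k * D := by
    intro A hA hAU
    have h1 := hsplit A hA
    have h2 : (sg F (A ∩ U) : ℝ) ≤ ((A ∩ U).card : ℝ) * F.card := by
      exact_mod_cast sg_le_card F (A ∩ U)
    have h3 : ((A ∩ U).card : ℝ) ≤ t - 1 := by
      have : ((A ∩ U).card : ℝ) + 1 ≤ t := by exact_mod_cast hAU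
      linarith
    nlinarith
  have key : ∀ A ∈ F, (sg F A : ℝ) ≤ ((t - 1) * F.card + 2 * (k * D))
      + (if t + 1 ≤ (A ∩ H).card then k * (F.card : ℝ) else 0)
      + (if P A then N else 0) := by
    intro A hA
    have hA' := mem_powersetCard.1 (hF hA)
    have ht1 : (0 : ℝ) ≤ (t - 1) * F.card := by
      have : (1 : ℝ) ≤ t := by exact_mod_cast ht
      exact mul_nonneg (by linarith) hM0
    have hi1 : (0 : ℝ) ≤ (if t + 1 ≤ (A ∩ H).card then k * (F.card : ℝ) else 0) := by
      split_ifs <;> positivity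
    have hi2 : (0 : ℝ) ≤ (if P A then N else 0) := by
      split_ifs <;> positivity
    by_cases hc1 : t + 1 ≤ (A ∩ H).card
    · rw [if_pos hc1]
      have : (sg F A : ℝ) ≤ k * F.card := by
        rw [← hA'.2]; exact_mod_cast sg_le_card F A
      linarith
    by_cases hc2 : (A ∩ U).card < t
    · have := hsmall A hA hc2
      linarith
    have hcU : (A ∩ U).card = t := by
      have := card_le_card (inter_subset_inter_left hU : A ∩ U ⊆ A ∩ H)
      omega
    have hYmem : A ∩ U ∈ (Icc 1 n).powersetCard t :=
      mem_powersetCard.2 ⟨inter_subset_left.trans hA'.1, hcU⟩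
    have h1 := hsplit A hA
    by_cases hc3 : fullStar n k (A ∩ U) ⊆ F
    · rw [if_pos ((hP A).2 ⟨A ∩ U, hYmem, hc3, inter_subset_left⟩)]
      have h2 : (sg F (A ∩ U) : ℝ) ≤ ((t - 1 : ℕ) : ℝ) * F.card
          + (F.filter fun B => A ∩ U ⊆ B).card := by
        exact_mod_cast sg_le_star F (A ∩ U) t ht hcU
      rw [Nat.cast_sub ht, Nat.cast_one] at h2
      have h3 := hstar _ hYmem
      linarith
    · obtain ⟨B, hB, hBF⟩ := not_subset.1 hc3
      have hB' := mem_filter.1 hB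
      have h2 : (sg F (A ∩ U) : ℝ) ≤ sg F A₀ := by
        exact_mod_cast (sg_mono F hB'.2).trans (exchange hF hopt hA₀ hB'.1 hBF)
      have h3 := hsmall A₀ hA₀ hA₀U
      linarith
  have hsum : (totalInt F : ℝ) ≤ F.card * ((t - 1) * F.card + 2 * (k * D))
      + (bigF F H t).card * (k * (F.card : ℝ)) + Full.card * N := by
    rw [totalInt_eq]
    push_cast
    refine (sum_le_sum key).trans (le_of_eq ?_)
    rw [sum_add_distrib, sum_add_distrib, ← sum_filter, ← sum_filter]
    simp only [sum_const, nsmul_eq_mul]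
    rfl
  nlinarith

lemma const_bound (k r t n : ℕ) (hk : 2 ≤ k) (ht : 2 ≤ t)
    (hn : Cconst k t r 1 * (3 * t * Cconst k t r t) ^ (2 * t) ≤ n) :
    10 ^ 6 * k ^ 2 * (10 ^ 14 * k ^ 4 * (r + 1) ^ 14) ^ (t + 2) ≤ n := by
  refine le_trans ?_ hn
  have hk0 : 0 < k := by omega
  have ht0 : 0 < t := by omega
  have h1 : 10 ^ 6 * k ^ 2 ≤ Cconst k t r 1 := by
    have e : Cconst k t r 1 = 10 ^ 6 * k ^ 2 * (t ^ 4 * (r + 1) ^ 7) := by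
      simp [Cconst]; ring
    rw [e]
    exact Nat.le_mul_of_pos_right _ (by positivity)
  have h2 : 10 ^ 14 * k ^ 4 * (r + 1) ^ 14 ≤ 3 * t * Cconst k t r t := by
    refine le_trans ?_ (Nat.le_mul_of_pos_left _ (by positivity : 0 < 3 * t))
    have p1 : 4 ≤ t + 2 := by omega
    have p2 : 2 ^ 4 ≤ 2 ^ (t + 2) := Nat.pow_le_pow_right (by norm_num) p1
    have p3 : 2 ^ 1 ≤ 2 ^ (t - 1) := Nat.pow_le_pow_right (by norm_num) (by omega)
    have q1 : 10 ^ 14 ≤ 10 ^ (2 ^ (t + 2) - 2) := Nat.pow_le_pow_right (by norm_num) (by omega)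
    have q2 : (k ^ 2 * t ^ 4 * (r + 1) ^ 7) ^ 2 ≤ (k ^ 2 * t ^ 4 * (r + 1) ^ 7) ^ (2 ^ (t - 1)) :=
      Nat.pow_le_pow_right (by positivity) (by omega)
    have q3 : k ^ 4 * (r + 1) ^ 14 ≤ (k ^ 2 * t ^ 4 * (r + 1) ^ 7) ^ 2 := by
      have e : (k ^ 2 * t ^ 4 * (r + 1) ^ 7) ^ 2 = k ^ 4 * (r + 1) ^ 14 * t ^ 8 := by ring
      rw [e]
      exact Nat.le_mul_of_pos_right _ (by positivity)
    unfold Cconst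
    calc 10 ^ 14 * k ^ 4 * (r + 1) ^ 14 = 10 ^ 14 * (k ^ 4 * (r + 1) ^ 14) := by ring
      _ ≤ 10 ^ (2 ^ (t + 2) - 2) * (k ^ 2 * t ^ 4 * (r + 1) ^ 7) ^ (2 ^ (t - 1)) :=
        Nat.mul_le_mul q1 (q3.trans q2)
      _ ≤ 2 ^ (2 ^ (t - 1) - 1) * (10 ^ (2 ^ (t + 2) - 2) * (k ^ 2 * t ^ 4 * (r + 1) ^ 7) ^ (2 ^ (t - 1))) :=
        Nat.le_mul_of_pos_left _ (by positivity)
      _ = _ := by ring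
  refine Nat.mul_le_mul h1 ?_
  calc _ ≤ (10 ^ 14 * k ^ 4 * (r + 1) ^ 14) ^ (2 * t) :=
        Nat.pow_le_pow_right (by positivity) (by omega)
    _ ≤ _ := Nat.pow_le_pow_left h2 _

/-- The pure real-number contradiction. -/
lemma numeric (k R δ θ q f e : ℝ) (hk : 1 ≤ k) (hR : 1 ≤ R) (hδ1 : δ ≤ 1)
    (hδ : 6 ≤ 10 ^ 5 * (R * δ))
    (hθ : θ * (6 * 10 ^ 13 * k ^ 2 * R ^ 6) = 1)
    (hq0 : 0 ≤ q) (hf0 : 0 ≤ f)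
    (hq : q * (10 ^ 20 * k ^ 5 * R ^ 14) ≤ 1) (hf : f * (10 ^ 20 * k ^ 5 * R ^ 14) ≤ 1)
    (he : e = 2 * R ^ 2 * q + 2 * k * R * f + k * θ * R ^ 2)
    (hcon : δ ^ 2 ≤ 2 * R ^ 2 * q + 2 * k * R * (e / δ + θ * R) + k * R * f) : False := by
  have hRδ : 0 < R * δ := by nlinarith
  have hδ0 : 0 < δ := by
    by_contra h
    nlinarith
  have hk0 : 0 < k := by linarith
  have hR0 : 0 < R := by linarith
  have hX : 0 < 6 * 10 ^ 13 * k ^ 2 * R ^ 6 := by positivity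
  have hθ0 : 0 < θ := by
    by_contra h
    nlinarith
  have he0 : 0 ≤ e := by rw [he]; positivity
  -- bound on e
  have hR14 : R ^ 6 ≤ R ^ 14 := pow_le_pow_right₀ hR (by norm_num)
  have hR5 : R ^ 5 ≤ R ^ 14 := pow_le_pow_right₀ hR (by norm_num)
  have hk5 : k ^ 2 ≤ k ^ 5 := pow_le_pow_right₀ hk (by norm_num)
  have hk51 : k ≤ k ^ 5 := le_self_pow₀ hk (by norm_num)
  have b1 : 8 * k * R ^ 6 * q ≤ 8 / 10 ^ 20 := by
    have : k * R ^ 6 ≤ k ^ 5 * R ^ 14 := by gcongr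
    have := mul_le_mul_of_nonneg_left this hq0
    nlinarith
  have b2 : 8 * k ^ 2 * R ^ 5 * f ≤ 8 / 10 ^ 20 := by
    have : k ^ 2 * R ^ 5 ≤ k ^ 5 * R ^ 14 := by gcongr
    have := mul_le_mul_of_nonneg_left this hf0
    nlinarith
  have b3 : 4 * k ^ 2 * R ^ 6 * θ = 4 / (6 * 10 ^ 13) := by
    linarith
  have b4 : 4 * k * R ^ 4 * e ≤ 16 / 10 ^ 20 + 4 / (6 * 10 ^ 13) := by
    have : 4 * k * R ^ 4 * e = 8 * k * R ^ 6 * q + 8 * k ^ 2 * R ^ 5 * f + 4 * k ^ 2 * R ^ 6 * θ := by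
      rw [he]; ring
    rw [this, b3]; linarith
  have b5 : (6 / 10 ^ 5 : ℝ) ^ 3 ≤ (R * δ) ^ 3 := by
    apply pow_le_pow_left₀ (by norm_num)
    linarith
  have b6 : 4 * k * R * e < δ ^ 3 := by
    have h1 : 4 * k * R ^ 4 * e < (R * δ) ^ 3 := by
      refine lt_of_le_of_lt b4 (lt_of_lt_of_le ?_ b5)
      norm_num
    have h2 : R ^ 3 * (4 * k * R * e) < R ^ 3 * δ ^ 3 := by
      calc R ^ 3 * (4 * k * R * e) = 4 * k * R ^ 4 * e := by ring
        _ < (R * δ) ^ 3 := h1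
        _ = _ := by ring
    exact lt_of_mul_lt_mul_left h2 (by positivity)
  have c1 : 2 * k * R * (e / δ) < δ ^ 2 / 2 := by
    have : 2 * k * R * (e / δ) = (4 * k * R * e) / δ / 2 := by ring
    rw [this]
    have : (4 * k * R * e) / δ < δ ^ 2 := by
      rw [div_lt_iff₀ hδ0]
      calc _ < δ ^ 3 := b6
        _ = _ := by ring
    linarith
  have c2 : 4 * e ≤ 4 * k * R * e := by
    have : 1 ≤ k * R := one_le_mul_of_one_le_of_one_le hk hR
    nlinarith
  have c3 : δ ^ 3 ≤ δ ^ 2 := pow_le_pow_of_le_one hδ0.le hδ1 (by norm_num)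
  have d1 : 0 ≤ k * R * f := by positivity
  have d2 : 0 ≤ R ^ 2 * q := by positivity
  have d3 : 2 * R ^ 2 * q + 2 * k * R * (θ * R) + k * R * f ≤ 2 * e := by
    rw [he]; nlinarith
  have d4 : 2 * k * R * (e / δ + θ * R) = 2 * k * R * (e / δ) + 2 * k * R * (θ * R) := by ring
  linarith

set_option maxHeartbeats 1600000 in
lemma main_lt (k r t n : ℕ) (hk : 2 ≤ k) (ht : 2 ≤ t) (htk : t < k)
    (hn : 10 ^ 6 * k ^ 2 * (10 ^ 14 * k ^ 4 * (r + 1) ^ 14) ^ (t + 2) ≤ n)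
    (δ : ℝ) (hδ : 6 ≤ 10 ^ 5 * (((r : ℝ) + 1) * δ)) (hδ1 : δ ≤ 1)
    (F : Finset (Finset ℕ)) (hF : F ⊆ (Icc 1 n).powersetCard k)
    (hcard : (F.card : ℝ) =
      (∑ i ∈ Icc t (t + r - 1), ((n - i).choose (k - t) : ℝ)) +
        δ * ((n - (t + r)).choose (k - t) : ℝ))
    (hopt : ∀ G ⊆ (Icc 1 n).powersetCard k, G.card = F.card → totalInt G ≤ totalInt F)
    (hatmostone : ∀ Y1 Y2 : Finset ℕ, Y1 ∈ (Icc 1 n).powersetCard t →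
      Y2 ∈ (Icc 1 n).powersetCard t → fullStar n k Y1 ⊆ F → fullStar n k Y2 ⊆ F → Y1 = Y2) :
    ∃ U ⊆ Icc 1 n, U.card ≤ t * (4 * r + 5) ∧ ∀ A ∈ F, t ≤ (A ∩ U).card := by
  have hr0 : (0 : ℝ) ≤ r := Nat.cast_nonneg _
  have hδ0 : 0 < δ := by
    by_contra h
    nlinarith
  rcases F.eq_empty_or_nonempty with hFe | hFne
  · exact ⟨∅, by simp, by simp, by simp [hFe]⟩
  obtain ⟨L, hL⟩ : ∃ L : ℕ, L = 10 ^ 14 * k ^ 4 * (r + 1) ^ 14 := ⟨_, rfl⟩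
  rw [← hL] at hn
  have hL1 : 1 ≤ L := by
    have : 0 < L := by rw [hL]; positivity
    omega
  have hLn : L ≤ n := by
    refine le_trans ?_ hn
    calc L ≤ L ^ (t + 2) := Nat.le_self_pow (by omega) _
      _ ≤ _ := Nat.le_mul_of_pos_left _ (by positivity)
  have hkrL : k + r ≤ L := by
    have h1 : k ≤ k ^ 4 := Nat.le_self_pow (by norm_num) _
    have h2 : r + 1 ≤ (r + 1) ^ 14 := Nat.le_self_pow (by norm_num) _
    calc k + r ≤ k + k * r := Nat.add_le_add_left (Nat.le_mul_of_pos_left r (by omega)) k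
      _ = k * (r + 1) := by ring
      _ ≤ k ^ 4 * (r + 1) ^ 14 := Nat.mul_le_mul h1 h2
      _ ≤ 10 ^ 14 * (k ^ 4 * (r + 1) ^ 14) := Nat.le_mul_of_pos_left _ (by norm_num)
      _ = L := by rw [hL]; ring
  have hkn : k ≤ n := by omega
  obtain ⟨hMle, hlow⟩ := low k r t n ht htk (by omega) δ hδ0.le hδ1 F hcard hopt
  -- the case of one full star, r = 0
  by_cases hcase : r = 0 ∧ ∃ Y ∈ (Icc 1 n).powersetCard t, fullStar n k Y ⊆ F
  · obtain ⟨h0, Y, hY, hYF⟩ := hcase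
    have hY' := mem_powersetCard.1 hY
    refine ⟨Y, hY'.1, by rw [hY'.2]; exact Nat.le_mul_of_pos_right _ (by omega), ?_⟩
    have hc : F.card ≤ (n - t).choose (k - t) := by
      have : (F.card : ℝ) ≤ ((n - t).choose (k - t) : ℝ) := by
        refine hMle.trans ?_
        rw [h0, Nat.cast_zero, zero_add]
        have : (0 : ℝ) ≤ ((n - t).choose (k - t) : ℝ) := Nat.cast_nonneg _
        exact mul_le_of_le_one_left this hδ1
      exact_mod_cast this
    have hlow2 : (n - t).choose (k - t) ≤ (fullStar n k Y).card := by
      have h0 : ((Icc 1 n \ Y).powersetCard (k - t)).card = (n - t).choose (k - t) := by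
        rw [card_powersetCard, card_sdiff_of_subset hY'.1, Nat.card_Icc, hY'.2]
        simp
      rw [← h0]
      refine card_le_card_of_injOn (fun A => Y ∪ A) ?_ ?_
      · intro A hA
        have hA' := mem_powersetCard.1 (mem_coe.1 hA)
        have hd : Disjoint Y A := by
          rw [disjoint_left]
          intro x hx hxA
          exact (mem_sdiff.1 (hA'.1 hxA)).2 hx
        refine mem_coe.2 (mem_filter.2 ⟨mem_powersetCard.2 ⟨?_, ?_⟩, subset_union_left⟩)
        · exact union_subset hY'.1 (hA'.1.trans sdiff_subset)
        · rw [card_union_of_disjoint hd, hA'.2, hY'.2]; omega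
      · intro A hA B hB heq
        have key : ∀ A ∈ (Icc 1 n \ Y).powersetCard (k - t), (Y ∪ A) \ Y = A := by
          intro A hA
          have hA' := mem_powersetCard.1 hA
          have hd : Disjoint Y A := by
            rw [disjoint_left]
            intro x hx hxA
            exact (mem_sdiff.1 (hA'.1 hxA)).2 hx
          rw [union_sdiff_left, sdiff_eq_self_of_disjoint hd.symm]
        simp only at heq
        rw [← key A hA, ← key B hB, heq]
    have heq := eq_of_subset_of_card_le hYF (hc.trans hlow2)
    intro A hA
    rw [← heq] at hA
    rw [← hY'.2]
    exact card_le_card (subset_inter (mem_filter.1 hA).2 Subset.rfl)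
  have hr' : r = 0 → ∀ Y ∈ (Icc 1 n).powersetCard t, ¬ fullStar n k Y ⊆ F := by
    intro h0 Y hY hYF
    exact hcase ⟨h0, Y, hY, hYF⟩
  -- the heavy vertices
  obtain ⟨L0, hL0⟩ : ∃ L0 : ℕ, L0 = 6 * 10 ^ 13 * k ^ 2 * (r + 1) ^ 6 := ⟨_, rfl⟩
  have hL0pos : 0 < L0 := by rw [hL0]; positivity
  set H := (Icc 1 n).filter fun x => F.card ≤ L0 * dg F x with hH
  have hHsub : H ⊆ Icc 1 n := filter_subset _ _
  have hMpos : 0 < F.card := card_pos.2 hFne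
  have hHcard : H.card ≤ L := by
    have h1 : H.card * F.card ≤ L0 * (k * F.card) := by
      calc H.card * F.card = ∑ x ∈ H, F.card := by simp
        _ ≤ ∑ x ∈ H, L0 * dg F x := sum_le_sum fun x hx => (mem_filter.1 hx).2
        _ ≤ ∑ x ∈ Icc 1 n, L0 * dg F x := sum_le_sum_of_subset hHsub
        _ = L0 * sg F (Icc 1 n) := by rw [← mul_sum, sg_eq]
        _ ≤ L0 * (k * F.card) := by
          refine Nat.mul_le_mul_left _ ?_
          unfold sg
          rw [mul_comm, ← smul_eq_mul]
          refine sum_le_card_nsmul _ _ _ fun B hB => ?_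
          rw [← (mem_powersetCard.1 (hF hB)).2]
          exact card_le_card inter_subset_right
    have h2 : H.card ≤ L0 * k := by
      have : H.card * F.card ≤ (L0 * k) * F.card := by rw [mul_assoc]; exact h1
      exact Nat.le_of_mul_le_mul_right this hMpos
    refine h2.trans ?_
    calc L0 * k = 6 * 10 ^ 13 * (k ^ 3 * (r + 1) ^ 6) := by rw [hL0]; ring
      _ ≤ 10 ^ 14 * (k ^ 4 * (r + 1) ^ 14) := by
        refine Nat.mul_le_mul (by norm_num) (Nat.mul_le_mul ?_ ?_)
        · exact Nat.pow_le_pow_right (by omega) (by norm_num)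
        · exact Nat.pow_le_pow_right (by omega) (by norm_num)
      _ = L := by rw [hL]; ring
  -- real quantities
  set Nn : ℕ := (n - t).choose (k - t) with hNn
  set Qn : ℕ := (n - (t + 1)).choose (k - (t + 1)) with hQn
  have hNpos : 0 < Nn := Nat.choose_pos (by omega)
  have hQN : Qn * n ≤ k * Nn := by
    have h1 := Nat.add_one_mul_choose_eq (n - (t + 1)) (k - (t + 1))
    have e1 : n - (t + 1) + 1 = n - t := by omega
    have e2 : k - (t + 1) + 1 = k - t := by omega
    rw [e1, e2] at h1
    change (n - t) * Qn = Nn * (k - t) at h1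
    obtain ⟨a, rfl⟩ : ∃ a, n = t + a := ⟨n - t, by omega⟩
    obtain ⟨b, rfl⟩ : ∃ b, k = t + b := ⟨k - t, by omega⟩
    simp only [add_tsub_cancel_left] at h1
    have hb : b ≤ a := by omega
    have h4 : Qn ≤ Nn := by
      have h5 : a * Qn ≤ a * Nn := by rw [h1, mul_comm]; exact Nat.mul_le_mul_right _ hb
      exact Nat.le_of_mul_le_mul_left h5 (by omega)
    calc Qn * (t + a) = t * Qn + a * Qn := by ring
      _ = t * Qn + Nn * b := by rw [h1]
      _ ≤ t * Nn + Nn * b := Nat.add_le_add_right (Nat.mul_le_mul_left _ h4) _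
      _ = (t + b) * Nn := by ring
  have hPn := bigF_card (t := t) hF H hHsub
  rw [← hQn] at hPn
  clear_value Nn Qn
  set Pn : ℕ := (bigF F H t).card with hPnd
  clear_value Pn
  have hLpow : L ^ (t + 1) * (10 ^ 6 * k ^ 2 * L) ≤ n := by
    calc _ = 10 ^ 6 * k ^ 2 * L ^ (t + 2) := by ring
      _ ≤ n := hn
  have hW : Qn * L ^ (t + 1) * (10 ^ 6 * k * L) ≤ Nn := by
    have h1 : k * (Qn * L ^ (t + 1) * (10 ^ 6 * k * L)) ≤ k * Nn := by
      calc _ = Qn * (L ^ (t + 1) * (10 ^ 6 * k ^ 2 * L)) := by ring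
        _ ≤ Qn * n := Nat.mul_le_mul_left _ hLpow
        _ ≤ _ := hQN
    exact Nat.le_of_mul_le_mul_left h1 (by omega)
  have hQs : Qn * (10 ^ 6 * k * L) ≤ Nn := by
    refine le_trans (Nat.mul_le_mul_right _ ?_) hW
    exact Nat.le_mul_of_pos_right _ (by positivity)
  have hPs : Pn * (10 ^ 6 * k * L) ≤ Nn := by
    refine le_trans (Nat.mul_le_mul_right _ ?_) hW
    refine hPn.trans ?_
    rw [mul_comm]
    exact Nat.mul_le_mul_left _ (Nat.pow_le_pow_left hHcard _)
  set M : ℝ := (F.card : ℝ) with hM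
  set N : ℝ := (Nn : ℝ) with hN
  clear_value M N
  have hN0 : 0 < N := by rw [hN]; exact_mod_cast hNpos
  have hM0 : 0 ≤ M := by rw [hM]; exact Nat.cast_nonneg _
  obtain ⟨R, hR⟩ : ∃ z : ℝ, z = (r : ℝ) + 1 := ⟨_, rfl⟩
  rw [← hR] at hlow hδ
  have hR1 : 1 ≤ R := by rw [hR]; linarith
  obtain ⟨θ, hθ⟩ : ∃ z : ℝ, z = 1 / (L0 : ℝ) := ⟨_, rfl⟩
  have hL0r : (0 : ℝ) < L0 := by exact_mod_cast hL0pos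
  have hθ0 : 0 ≤ θ := by rw [hθ]; positivity
  have hk1 : (1 : ℝ) ≤ k := by exact_mod_cast (by omega : 1 ≤ k)
  obtain ⟨q, hq⟩ : ∃ z : ℝ, z = (Qn : ℝ) / N := ⟨_, rfl⟩
  obtain ⟨f, hf⟩ : ∃ z : ℝ, z = (Pn : ℝ) / N := ⟨_, rfl⟩
  have hq0 : 0 ≤ q := by rw [hq]; positivity
  have hf0 : 0 ≤ f := by rw [hf]; positivity
  have hQq : (Qn : ℝ) = q * N := by rw [hq]; exact (div_mul_cancel₀ _ hN0.ne').symm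
  have hPf : (Pn : ℝ) = f * N := by rw [hf]; exact (div_mul_cancel₀ _ hN0.ne').symm
  obtain ⟨m, hm⟩ : ∃ z : ℝ, z = M / N := ⟨_, rfl⟩
  have hMm : M = m * N := by rw [hm]; exact (div_mul_cancel₀ _ hN0.ne').symm
  have hm0 : 0 ≤ m := by rw [hm]; positivity
  have hmle : m ≤ r + δ := by
    rw [hm, div_le_iff₀ hN0]; exact hMle
  have hmR : m ≤ R := by rw [hR]; linarith
  obtain ⟨e, he⟩ : ∃ z : ℝ, z = 2 * R ^ 2 * q + 2 * k * R * f + k * θ * R ^ 2 := ⟨_, rfl⟩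
  have he0 : 0 ≤ e := by rw [he]; positivity
  have hdH : ∀ x ∈ Icc 1 n \ H, (dg F x : ℝ) ≤ θ * M := by
    intro x hx
    have hx' := mem_sdiff.1 hx
    have : L0 * dg F x < F.card := by
      by_contra hcon
      exact hx'.2 (mem_filter.2 ⟨hx'.1, not_lt.1 hcon⟩)
    have h2 : (L0 : ℝ) * dg F x ≤ M := by rw [hM]; exact_mod_cast this.le
    rw [hθ, one_div, inv_mul_eq_div, le_div_iff₀ hL0r]
    linarith
  have hhigh := high (t := t) (by omega) hF H (θ * M) (by positivity) hdH
  rw [← hM, ← hPnd] at hhigh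
  -- weights
  set w : Finset ℕ → ℝ := fun Y => ((F.filter fun A => A ∩ H = Y).card : ℝ) / N with hw
  have hwN : ∀ Y, ((F.filter fun A => A ∩ H = Y).card : ℝ) = w Y * N := by
    intro Y; rw [hw]; exact (div_mul_cancel₀ _ hN0.ne').symm
  have hw0 : ∀ Y ∈ H.powersetCard t, 0 ≤ w Y := fun Y _ => div_nonneg (Nat.cast_nonneg _) hN0.le
  have hw1 : ∀ Y ∈ H.powersetCard t, w Y ≤ 1 := by
    intro Y hY
    have hY' := mem_powersetCard.1 hY
    rw [hw]
    simp only
    rw [div_le_one hN0, hN, hNn]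
    have h1 := fullStar_card_le n k Y (hY'.1.trans hHsub)
    rw [hY'.2] at h1
    have h2 : (F.filter fun A => A ∩ H = Y).card ≤ (fullStar n k Y).card := by
      refine card_le_card ?_
      intro A hA
      have hA' := mem_filter.1 hA
      exact mem_filter.2 ⟨hF hA'.1, by rw [← hA'.2]; exact inter_subset_left⟩
    exact_mod_cast h2.trans h1
  have hcount : ∀ S : Finset (Finset ℕ), ∑ Y ∈ S, w Y * N = ((F.filter fun A => A ∩ H ∈ S).card : ℝ) := by
    intro S
    rw [card_eq_sum_card_fiberwise (f := fun A => A ∩ H) (t := S)]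
    · push_cast
      refine sum_congr rfl fun Y hY => ?_
      rw [← hwN, filter_filter]
      congr 2
      ext A
      simp only [mem_filter]
      constructor
      · rintro ⟨h1, h2⟩
        exact ⟨h1, h2 ▸ hY, h2⟩
      · rintro ⟨h1, _, h3⟩
        exact ⟨h1, h3⟩
    · intro A hA
      exact (mem_filter.1 (mem_coe.1 hA)).2
  clear_value w
  have hwsum : ∑ Y ∈ H.powersetCard t, w Y ≤ m := by
    rw [hm, le_div_iff₀ hN0, sum_mul, hcount, hM]
    exact_mod_cast card_filter_le _ _
  have hwsq : r + δ ^ 2 - e ≤ ∑ Y ∈ H.powersetCard t, w Y ^ 2 := by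
    have h1 : ∑ Y ∈ H.powersetCard t, ((F.filter fun A => A ∩ H = Y).card : ℝ) ^ 2
        = (∑ Y ∈ H.powersetCard t, w Y ^ 2) * N ^ 2 := by
      rw [sum_mul]
      refine sum_congr rfl fun Y _ => ?_
      rw [hwN, mul_pow]
    rw [h1] at hhigh
    have h2 : N ^ 2 * (r + δ ^ 2) - 2 * R ^ 2 * N * Qn
        ≤ (∑ Y ∈ H.powersetCard t, w Y ^ 2) * N ^ 2 + 2 * k * M * Pn + k * (θ * M) * M := by
      linarith
    rw [hQq, hPf, hMm] at h2
    have h3 : N ^ 2 * (r + δ ^ 2 - 2 * R ^ 2 * q)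
        ≤ N ^ 2 * ((∑ Y ∈ H.powersetCard t, w Y ^ 2) + 2 * k * m * f + k * θ * m ^ 2) := by
      linarith
    have h4 := le_of_mul_le_mul_left h3 (by positivity)
    have h5 : 2 * k * m * f ≤ 2 * k * R * f := by gcongr
    have h6 : k * θ * m ^ 2 ≤ k * θ * R ^ 2 := by gcongr
    rw [he]
    linarith
  obtain ⟨S, hS, hSc, hSe⟩ := stability (H.powersetCard t) w r δ e m hδ0 hδ1 hw0 hw1 hmle hwsum hwsq
  set U := S.biUnion id with hU
  have hUH : U ⊆ H := by
    intro x hx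
    obtain ⟨Y, hY, hxY⟩ := mem_biUnion.1 hx
    exact (mem_powersetCard.1 (hS hY)).1 hxY
  have hUc : U.card ≤ t * (4 * r + 5) := by
    have h1 : U.card ≤ S.card * t := by
      refine card_biUnion_le_card_mul _ _ _ fun Y hY => ?_
      exact (mem_powersetCard.1 (hS hY)).2.le
    calc U.card ≤ S.card * t := h1
      _ = t * S.card := mul_comm _ _
      _ ≤ _ := Nat.mul_le_mul_left _ (by omega)
  refine ⟨U, hUH.trans hHsub, hUc, ?_⟩
  by_contra hcon
  push Not at hcon
  obtain ⟨A₀, hA₀, hA₀U⟩ := hcon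
  have hbad : ((F.filter fun A => A ∩ H ∉ S).card : ℝ) ≤ e / δ * N := by
    have h1 : ((F.filter fun A => A ∩ H ∈ S).card : ℝ) + (F.filter fun A => A ∩ H ∉ S).card = M := by
      rw [hM]
      exact_mod_cast card_filter_add_card_filter_not (s := F) (fun A => A ∩ H ∈ S)
    rw [← hcount, ← sum_mul, hMm] at h1
    have h2 : m - ∑ x ∈ S, w x ≤ e / δ := by
      rw [le_div_iff₀ hδ0]; linarith
    have h3 := mul_le_mul_of_nonneg_right h2 hN0.le
    linarith
  obtain ⟨D, hD⟩ : ∃ z : ℝ, z = e / δ * N + θ * M := ⟨_, rfl⟩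
  have hD0 : 0 ≤ D := by rw [hD]; positivity
  have hdU : ∀ x ∈ Icc 1 n \ U, (dg F x : ℝ) ≤ D := by
    intro x hx
    have hx' := mem_sdiff.1 hx
    have hp1 : 0 ≤ e / δ * N := by positivity
    have hp2 : 0 ≤ θ * M := by positivity
    rw [hD]
    by_cases hxH : x ∈ H
    · have : dg F x ≤ (F.filter fun A => A ∩ H ∉ S).card := by
        unfold dg
        refine card_le_card ?_
        intro A hA
        have hA' := mem_filter.1 hA
        refine mem_filter.2 ⟨hA'.1, fun hmem => hx'.2 ?_⟩
        exact mem_biUnion.2 ⟨A ∩ H, hmem, mem_inter.2 ⟨hA'.2, hxH⟩⟩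
      have : (dg F x : ℝ) ≤ (F.filter fun A => A ∩ H ∉ S).card := by exact_mod_cast this
      linarith
    · have := hdH x (mem_sdiff.2 ⟨hx'.1, hxH⟩)
      linarith
  have hfin := final_count (r := r) (by omega) hF hopt hatmostone hr' H U hUH D hD0 hdU
    A₀ hA₀ hA₀U
  rw [← hM, ← hPnd, ← hNn, ← hN] at hfin
  have hfin2 : N ^ 2 * (r + δ ^ 2) - 2 * R ^ 2 * N * Qn
      ≤ 2 * k * D * M + k * M * Pn + r * N ^ 2 := by
    linarith
  rw [hQq, hPf, hD, hMm] at hfin2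
  have h3 : N ^ 2 * (δ ^ 2) ≤ N ^ 2 * (2 * R ^ 2 * q + 2 * k * m * (e / δ + θ * m) + k * m * f) := by
    linarith
  have h4 := le_of_mul_le_mul_left h3 (by positivity)
  have h5 : 2 * k * m * (e / δ + θ * m) ≤ 2 * k * R * (e / δ + θ * R) := by gcongr
  have h6 : k * m * f ≤ k * R * f := by gcongr
  have hbnd : (10 ^ 20 * (k : ℝ) ^ 5 * R ^ 14) = ((10 ^ 6 * k * L : ℕ) : ℝ) := by
    rw [hL, hR]; push_cast; ring
  refine numeric k R δ θ q f e hk1 hR1 hδ1 hδ ?_ hq0 hf0 ?_ ?_ he (by linarith)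
  · have : (6 * 10 ^ 13 * (k : ℝ) ^ 2 * R ^ 6) = (L0 : ℝ) := by
      rw [hL0, hR]; push_cast; ring
    rw [this, hθ]
    exact div_mul_cancel₀ _ hL0r.ne'
  · rw [hbnd, hq, div_mul_eq_mul_div, div_le_one hN0, hN]
    exact_mod_cast hQs
  · rw [hbnd, hf, div_mul_eq_mul_div, div_le_one hN0, hN]
    exact_mod_cast hPs

/-- **Lemma.** If an optimal family `F` (of the size in the main theorem, `t ≥ 2`) contains
at most one full `t`-star, then `F` has a `t`-cover of size at most `t(4r+5)`. -/
theorem stmt13 (k r t n : ℕ) (hk : 2 ≤ k) (ht : 2 ≤ t)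
    (hn : Cconst k t r 1 * (3 * t * Cconst k t r t) ^ (2 * t) ≤ n)
    (δ : ℝ)
    (hδ : (60 * (k : ℝ) ^ 2 * ((r : ℝ) + 1) ^ 6 * (t : ℝ) ^ 4 / (Cconst k t r 1 : ℝ) ≤ δ ∧
           δ ≤ 1 - 60 * (k : ℝ) ^ 2 * ((r : ℝ) + 1) ^ 6 * (t : ℝ) ^ 4 / (Cconst k t r 1 : ℝ)) ∨
          δ = 1)
    (F : Finset (Finset ℕ)) (hF : F ⊆ (Icc 1 n).powersetCard k)
    (hcard : (F.card : ℝ) =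
      (∑ i ∈ Icc t (t + r - 1), ((n - i).choose (k - t) : ℝ)) +
        δ * ((n - (t + r)).choose (k - t) : ℝ))
    (hopt : ∀ G ⊆ (Icc 1 n).powersetCard k, G.card = F.card → totalInt G ≤ totalInt F)
    (hatmostone : ∀ Y1 Y2 : Finset ℕ, Y1 ∈ (Icc 1 n).powersetCard t →
      Y2 ∈ (Icc 1 n).powersetCard t → fullStar n k Y1 ⊆ F → fullStar n k Y2 ⊆ F → Y1 = Y2) :
    ∃ U ⊆ Icc 1 n, U.card ≤ t * (4 * r + 5) ∧ ∀ A ∈ F, t ≤ (A ∩ U).card := by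
  have hk0 : (0 : ℝ) < k := by exact_mod_cast (by omega : 0 < k)
  have ht0 : (0 : ℝ) < t := by exact_mod_cast (by omega : 0 < t)
  have hbig := const_bound k r t n hk ht hn
  have hC1 : (Cconst k t r 1 : ℝ) = 10 ^ 6 * ((k : ℝ) ^ 2 * (t : ℝ) ^ 4 * ((r : ℝ) + 1) ^ 7) := by
    simp only [Cconst]
    norm_num
  have hε : 60 * (k : ℝ) ^ 2 * ((r : ℝ) + 1) ^ 6 * (t : ℝ) ^ 4 / (Cconst k t r 1 : ℝ)
      = 6 / (10 ^ 5 * ((r : ℝ) + 1)) := by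
    rw [hC1]
    have : (r : ℝ) + 1 ≠ 0 := by positivity
    field_simp
    norm_num
  rw [hε] at hδ
  have hr0 : (0 : ℝ) ≤ r := Nat.cast_nonneg _
  have hε0 : 0 < 6 / (10 ^ 5 * ((r : ℝ) + 1)) := by positivity
  have hδ1 : δ ≤ 1 := by
    rcases hδ with h | h
    · linarith [h.2]
    · exact h.le
  have hδ2 : 6 ≤ 10 ^ 5 * (((r : ℝ) + 1) * δ) := by
    rcases hδ with h | h
    · have := (div_le_iff₀ (by positivity : 0 < 10 ^ 5 * ((r : ℝ) + 1))).1 h.1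
      linarith
    · rw [h]; linarith
  rcases lt_trichotomy t k with h | h | h
  · exact main_lt k r t n hk ht h hbig δ hδ2 hδ1 F hF hcard hopt hatmostone
  · subst h
    have hstar : ∀ A ∈ F, fullStar n t A ⊆ F := by
      intro A hA B hB
      have hB' := mem_filter.1 hB
      have hBc := (mem_powersetCard.1 hB'.1).2
      have hAc := (mem_powersetCard.1 (hF hA)).2
      rw [← eq_of_subset_of_card_le hB'.2 (by omega)]
      exact hA
    rcases F.eq_empty_or_nonempty with hFe | ⟨A, hA⟩
    · exact ⟨∅, by simp, by simp, by simp [hFe]⟩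
    · have hA' := mem_powersetCard.1 (hF hA)
      refine ⟨A, hA'.1, by rw [hA'.2]; nlinarith, ?_⟩
      intro B hB
      rw [hatmostone B A (hF hB) (hF hA) (hstar B hB) (hstar A hA), inter_self, hA'.2]
  · exfalso
    have htn : t + 1 ≤ n := by
      refine le_trans ?_ hbig
      have h1 : t + 2 ≤ 2 ^ (t + 2) := Nat.lt_two_pow_self.le
      have h2 : 2 ^ (t + 2) ≤ (10 ^ 14 * k ^ 4 * (r + 1) ^ 14) ^ (t + 2) := by
        refine Nat.pow_le_pow_left ?_ _
        have : 0 < k ^ 4 * (r + 1) ^ 14 := by positivity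
        calc 2 ≤ 10 ^ 14 * (k ^ 4 * (r + 1) ^ 14) := by omega
          _ = _ := by ring
      have h3 := Nat.le_mul_of_pos_left ((10 ^ 14 * k ^ 4 * (r + 1) ^ 14) ^ (t + 2))
        (by positivity : 0 < 10 ^ 6 * k ^ 2)
      omega
    have hemp : ∀ Y : Finset ℕ, Y.card = t → fullStar n k Y ⊆ F := by
      intro Y hY A hA
      have hA' := mem_filter.1 hA
      have := card_le_card hA'.2
      have := (mem_powersetCard.1 hA'.1).2
      omega
    have c1 : (Icc 1 t).card = t := by simp
    have c2 : (Icc 2 (t + 1)).card = t := by simp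
    have heq := hatmostone (Icc 1 t) (Icc 2 (t + 1))
      (mem_powersetCard.2 ⟨Icc_subset_Icc le_rfl (by omega), c1⟩)
      (mem_powersetCard.2 ⟨Icc_subset_Icc (by omega) (by omega), c2⟩) (hemp _ c1) (hemp _ c2)
    have : 1 ∈ Icc 2 (t + 1) := by rw [← heq, mem_Icc]; omega
    rw [mem_Icc] at this
    omega
end

section
/- Let r ≥ 0 be an integer, and let a, b, M be real numbers with 0 ≤ a ≤ b and ra + b ≤ M ≤ (r+1)b. Let r0 be the largest integer with 0 ≤ r0 ≤ r such that M − r0·b ≥ (r+1−r0)·a. Then for all real numbers x_1, …, x_{r+1} with Σ_{i=1}^{r+1} x_i = M and a ≤ x_i ≤ b for each i, one has Σ_{i=1}^{r+1} x_i² ≤ r0·b² + (r − r0)·a² + (M − r0·b − (r − r0)·a)². Moreover, equality holds if and only if, up to a permutation of the coordinates, x_1 = … = x_{r0} = b, x_{r0+1} = M − r0·b − (r − r0)·a, and x_{r0+2} = … = x_{r+1} = a. -/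
open Finset

lemma aux_sum (r r0 : ℕ) (h : r0 ≤ r) (b c a : ℝ) :
    ∑ i : Fin (r + 1), (if (i : ℕ) < r0 then b else if (i : ℕ) = r0 then c else a)
      = (r0 : ℝ) * b + ((r : ℝ) - (r0 : ℝ)) * a + c := by
  obtain ⟨k, rfl⟩ := Nat.exists_eq_add_of_le h
  rw [Fin.sum_univ_eq_sum_range (fun i : ℕ => if i < r0 then b else if i = r0 then c else a)]
  rw [show r0 + k + 1 = r0 + 1 + k by ring, Finset.sum_range_add, Finset.sum_range_succ]
  have h1 : ∑ i ∈ Finset.range r0, (if i < r0 then b else if i = r0 then c else a)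
      = (r0 : ℝ) * b := by
    rw [Finset.sum_congr rfl (fun i hi => if_pos (Finset.mem_range.mp hi))]
    simp
  have h2 : ∑ i ∈ Finset.range k, (if r0 + 1 + i < r0 then b else if r0 + 1 + i = r0 then c else a)
      = (k : ℝ) * a := by
    have : ∀ i ∈ Finset.range k,
        (if r0 + 1 + i < r0 then b else if r0 + 1 + i = r0 then c else a) = a := by
      intro i _
      rw [if_neg (by omega), if_neg (by omega)]
    rw [Finset.sum_congr rfl this]
    simp
  rw [h1, h2]
  simp
  ring

lemma aux_main (n : ℕ) (a b c : ℝ) (hac : a ≤ c) (hcb : c ≤ b)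
    (p : Fin n) (y z : Fin n → ℝ) (hy : Antitone y) (hyb : ∀ i, a ≤ y i ∧ y i ≤ b)
    (hz1 : ∀ i, i < p → z i = b) (hz2 : z p = c) (hz3 : ∀ i, p < i → z i = a)
    (hs : ∑ i, y i = ∑ i, z i) :
    ∑ i, y i ^ 2 ≤ ∑ i, z i ^ 2 ∧ (∑ i, y i ^ 2 = ∑ i, z i ^ 2 → ∀ i, y i = z i) := by
  have key : ∀ l : ℝ, ∑ i, z i ^ 2 - ∑ i, y i ^ 2 = ∑ i, (z i - y i) * (z i + y i - l) := by
    intro l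
    have : ∀ i, (z i - y i) * (z i + y i - l) = z i ^ 2 - y i ^ 2 - l * (z i - y i) := by
      intro i; ring
    simp_rw [this]
    rw [Finset.sum_sub_distrib, Finset.sum_sub_distrib, ← Finset.mul_sum,
      Finset.sum_sub_distrib, hs]
    ring
  have hp := hyb p
  rcases le_or_gt (y p) c with hc | hc
  · have hn : ∀ i, 0 ≤ (z i - y i) * (z i + y i - (a + y p)) := by
      intro i
      have hi := hyb i
      rcases lt_trichotomy i p with h | h | h
      · rw [hz1 i h]
        have := hy h.le
        exact mul_nonneg (by linarith) (by linarith)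
      · subst h
        rw [hz2]
        exact mul_nonneg (by linarith) (by linarith)
      · rw [hz3 i h]
        have := hy h.le
        exact mul_nonneg_of_nonpos_of_nonpos (by linarith) (by linarith)
    refine ⟨?_, ?_⟩
    · have := Finset.sum_nonneg (s := Finset.univ) (fun i _ => hn i)
      linarith [key (a + y p)]
    · intro he
      have h0 : ∑ i, (z i - y i) * (z i + y i - (a + y p)) = 0 := by
        rw [← key, he, sub_self]
      rw [Finset.sum_eq_zero_iff_of_nonneg (fun i _ => hn i)] at h0
      have hle : ∀ i ∈ Finset.univ, z i ≤ y i := by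
        intro i hi
        have h1 := h0 i hi
        have h2 := hyb i
        rcases lt_trichotomy i p with h | h | h
        · rw [hz1 i h] at h1 ⊢
          have := hy h.le
          rcases mul_eq_zero.mp h1 with h | h <;> linarith
        · subst h
          rw [hz2] at h1 ⊢
          rcases mul_eq_zero.mp h1 with h | h <;> linarith
        · rw [hz3 i h]; exact h2.1
      have := (Finset.sum_eq_sum_iff_of_le hle).mp hs.symm
      intro i
      exact (this i (Finset.mem_univ i)).symm
  · have hn : ∀ i, 0 ≤ (z i - y i) * (z i + y i - (b + y p)) := by
      intro i
      have hi := hyb i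
      rcases lt_trichotomy i p with h | h | h
      · rw [hz1 i h]
        have := hy h.le
        exact mul_nonneg (by linarith) (by linarith)
      · subst h
        rw [hz2]
        exact mul_nonneg_of_nonpos_of_nonpos (by linarith) (by linarith)
      · rw [hz3 i h]
        have := hy h.le
        exact mul_nonneg_of_nonpos_of_nonpos (by linarith) (by linarith)
    refine ⟨?_, ?_⟩
    · have := Finset.sum_nonneg (s := Finset.univ) (fun i _ => hn i)
      linarith [key (b + y p)]
    · intro he
      have h0 : ∑ i, (z i - y i) * (z i + y i - (b + y p)) = 0 := by
        rw [← key, he, sub_self]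
      rw [Finset.sum_eq_zero_iff_of_nonneg (fun i _ => hn i)] at h0
      have h1 := h0 p (Finset.mem_univ p)
      rw [hz2] at h1
      exfalso
      rcases mul_eq_zero.mp h1 with h | h <;> linarith

/-- **Theorem (convexity).** Maximization of `∑ xᵢ²` over the polytope
`{x ∈ ℝ^{r+1} : ∑ xᵢ = M, a ≤ xᵢ ≤ b}`, with the equality case characterized up to a
permutation of the coordinates. Here `r0` is the largest integer `0 ≤ r0 ≤ r` with
`M − r0·b ≥ (r+1−r0)·a`. -/
theorem stmt15 (r : ℕ) (a b M : ℝ) (ha : 0 ≤ a) (hab : a ≤ b)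
    (hM1 : (r : ℝ) * a + b ≤ M) (hM2 : M ≤ ((r : ℝ) + 1) * b)
    (r0 : ℕ) (hr0r : r0 ≤ r)
    (hr0 : ((r : ℝ) + 1 - (r0 : ℝ)) * a ≤ M - (r0 : ℝ) * b)
    (hr0max : ∀ s : ℕ, s ≤ r → ((r : ℝ) + 1 - (s : ℝ)) * a ≤ M - (s : ℝ) * b → s ≤ r0)
    (x : Fin (r + 1) → ℝ) (hsum : ∑ i, x i = M)
    (hx : ∀ i, a ≤ x i ∧ x i ≤ b) :
    (∑ i, x i ^ 2 ≤
      (r0 : ℝ) * b ^ 2 + ((r : ℝ) - (r0 : ℝ)) * a ^ 2 +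
        (M - (r0 : ℝ) * b - ((r : ℝ) - (r0 : ℝ)) * a) ^ 2) ∧
    ((∑ i, x i ^ 2 =
        (r0 : ℝ) * b ^ 2 + ((r : ℝ) - (r0 : ℝ)) * a ^ 2 +
          (M - (r0 : ℝ) * b - ((r : ℝ) - (r0 : ℝ)) * a) ^ 2) ↔
      ∃ σ : Equiv.Perm (Fin (r + 1)), ∀ i : Fin (r + 1),
        x (σ i) = if (i : ℕ) < r0 then b
          else if (i : ℕ) = r0 then M - (r0 : ℝ) * b - ((r : ℝ) - (r0 : ℝ)) * a
          else a) := by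
  set c : ℝ := M - (r0 : ℝ) * b - ((r : ℝ) - (r0 : ℝ)) * a with hcdef
  have hac : a ≤ c := by rw [hcdef]; linarith
  have hcb : c ≤ b := by
    rcases hr0r.eq_or_lt with h | h
    · subst h; rw [hcdef]; linarith
    · by_contra hcon
      have := hr0max (r0 + 1) h (by push_cast; linarith)
      omega
  set z : Fin (r + 1) → ℝ := fun i => if (i : ℕ) < r0 then b else if (i : ℕ) = r0 then c else a
    with hz
  have hzs : ∑ i, z i = M := by
    rw [hz, aux_sum r r0 hr0r, hcdef]; ring
  have hzq : ∑ i, z i ^ 2 = (r0 : ℝ) * b ^ 2 + ((r : ℝ) - (r0 : ℝ)) * a ^ 2 + c ^ 2 := by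
    rw [← aux_sum r r0 hr0r]
    refine Finset.sum_congr rfl fun i _ => ?_
    simp only [hz]
    split_ifs <;> rfl
  let τ : Equiv.Perm (Fin (r + 1)) := Fin.revPerm.trans (Tuple.sort x)
  have hanti : Antitone (fun i => x (τ i)) := by
    intro i j hij
    exact Tuple.monotone_sort x (Fin.rev_le_rev.mpr hij)
  have hq : ∀ σ : Equiv.Perm (Fin (r + 1)), ∑ i, x (σ i) ^ 2 = ∑ i, x i ^ 2 :=
    fun σ => Equiv.sum_comp σ (fun i => x i ^ 2)
  have main := aux_main (r + 1) a b c hac hcb ⟨r0, by omega⟩ (fun i => x (τ i)) z hanti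
    (fun i => hx _)
    (fun i hi => if_pos hi)
    (by simp [hz])
    (fun i hi => by
      have hi' : r0 < (i : ℕ) := hi
      simp only [hz]
      rw [if_neg (by omega), if_neg (by omega)])
    (by rw [hzs, ← hsum]; exact Equiv.sum_comp τ x)
  rw [hq τ, hzq] at main
  refine ⟨main.1, fun h => ⟨τ, main.2 h⟩, ?_⟩
  rintro ⟨σ, hσ⟩
  rw [← hzq, ← hq σ]
  exact Finset.sum_congr rfl fun i _ => by rw [hσ i]
end

section
/- Let t ≥ 1 and let F ⊆ C([n],k) be a nonempty family with I(F) ≥ (t−1)·|F|². Then, writing b(x) = x(x−1)⋯(x−t+1)/t! for the real polynomial extension of the binomial coefficient, one has b(I(F)/|F|²)·|F|² ≤ Σ_{F1∈F} Σ_{F2∈F} C(|F1 ∩ F2|, t) = Σ_{A ∈ C([n],t)} deg_F(A)². -/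
open Finset

/-- **Jensen-type bound.** For a nonempty family `F` with `I(F) ≥ (t−1)|F|²`, writing
`b(x) = x(x−1)⋯(x−t+1)/t!` for the real extension of the binomial coefficient, one has
`b(I(F)/|F|²)·|F|² ≤ ∑_{F1,F2∈F} C(|F1∩F2|,t) = ∑_{A∈C([n],t)} deg_F(A)²`. -/
theorem stmt18 (n k t : ℕ) (ht : 1 ≤ t)
    (F : Finset (Finset ℕ)) (hF : F ⊆ (Icc 1 n).powersetCard k) (hne : F.Nonempty)
    (hI : ((t : ℝ) - 1) * (F.card : ℝ) ^ 2 ≤ (totalInt F : ℝ)) :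
    ((descPochhammer ℝ t).eval ((totalInt F : ℝ) / (F.card : ℝ) ^ 2) / (t.factorial : ℝ)) *
        (F.card : ℝ) ^ 2 ≤
      ∑ F1 ∈ F, ∑ F2 ∈ F, (((F1 ∩ F2).card).choose t : ℝ) ∧
    ∑ F1 ∈ F, ∑ F2 ∈ F, (((F1 ∩ F2).card).choose t : ℝ) =
      ∑ A ∈ (Icc 1 n).powersetCard t, (degF F A : ℝ) ^ 2 := by
  have hc : (0 : ℝ) < (F.card : ℝ) ^ 2 := by
    have : (0 : ℝ) < F.card := by exact_mod_cast hne.card_pos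
    positivity
  constructor
  · have hT : (totalInt F : ℝ) / (F.card : ℝ) ^ 2 =
        ∑ p ∈ F ×ˢ F, (1 / (F.card : ℝ) ^ 2) * ((p.1 ∩ p.2).card : ℝ) := by
      rw [← Finset.mul_sum, Finset.sum_product]
      unfold totalInt
      push_cast
      ring
    have hJ := descPochhammer_eval_div_factorial_le_sum_choose (n := t) (by omega)
      (t := F ×ˢ F) (fun p => (p.1 ∩ p.2).card) (fun _ => 1 / (F.card : ℝ) ^ 2)
      (fun _ _ => by positivity)
      (by
        rw [Finset.sum_const, Finset.card_product, nsmul_eq_mul]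
        push_cast
        field_simp)
      (by
        rw [← hT, le_div_iff₀ hc]
        exact hI)
    rw [← hT, ← Finset.mul_sum, Finset.sum_product] at hJ
    calc _ ≤ _ := mul_le_mul_of_nonneg_right hJ hc.le
      _ = _ := by field_simp
  · have key : ∀ F1 ∈ F, ∀ F2 ∈ F, (((F1 ∩ F2).card).choose t : ℝ) =
        ∑ A ∈ (Icc 1 n).powersetCard t,
          (if A ⊆ F1 then (1 : ℝ) else 0) * (if A ⊆ F2 then (1 : ℝ) else 0) := by
      intro F1 h1 F2 h2
      have hs : F1 ⊆ Icc 1 n := (Finset.mem_powersetCard.1 (hF h1)).1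
      have he : (F1 ∩ F2).powersetCard t =
          ((Icc 1 n).powersetCard t).filter (fun A => A ⊆ F1 ∧ A ⊆ F2) := by
        ext A
        simp only [Finset.mem_powersetCard, Finset.mem_filter, Finset.subset_inter_iff]
        constructor
        · rintro ⟨⟨a, b⟩, c⟩
          exact ⟨⟨a.trans hs, c⟩, a, b⟩
        · rintro ⟨⟨_, c⟩, a, b⟩
          exact ⟨⟨a, b⟩, c⟩
      rw [← Finset.card_powersetCard, he, Finset.card_filter]
      push_cast
      refine Finset.sum_congr rfl fun A _ => ?_
      by_cases a : A ⊆ F1 <;> by_cases b : A ⊆ F2 <;> simp [a, b]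
    rw [Finset.sum_congr rfl fun F1 h1 => Finset.sum_congr rfl fun F2 h2 => key F1 h1 F2 h2]
    rw [Finset.sum_congr rfl fun F1 _ => Finset.sum_comm, Finset.sum_comm]
    refine Finset.sum_congr rfl fun A _ => ?_
    rw [← Finset.sum_mul_sum, degF, Finset.card_filter]
    push_cast
    ring
end

section
/- Let k ≥ 2 and r ≥ 0 be integers, let n ≥ k + r + 1, and let δ ∈ [0,1] be such that M := Σ_{i=1}^{r} C(n−i, k−1) + δ·C(n−(r+1), k−1) is an integer. Then the family L_{n,k}(M) of the first M k-subsets of [n] in lexicographic order satisfies I(L_{n,k}(M)) ≥ (r + δ²)·C(n−1, k−1)². -/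
open Finset

theorem aux_mono {n k : ℕ} {L : Finset (Finset ℕ)} (hL : IsLexPrefix n k L)
    {A B : Finset ℕ} (hA : A ∈ (Icc 1 n).powersetCard k) (hAL : A ∉ L) (hB : B ∈ L)
    {a j : ℕ} (ha : a ∈ A) (haj : a ≤ j) : ∃ b ∈ B, b ≤ j := by
  have hne : A ≠ B := fun h => hAL (h ▸ hB)
  have hS : ((A \ B) ∪ (B \ A)).Nonempty := by
    rw [nonempty_iff_ne_empty]
    intro h
    apply hne
    ext x
    have hx : x ∉ (A \ B) ∪ (B \ A) := by simp [h]
    simp only [mem_union, mem_sdiff] at hx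
    tauto
  have hm := min'_mem _ hS
  have hle : ∀ x ∈ (A \ B) ∪ (B \ A), ((A \ B) ∪ (B \ A)).min' hS ≤ x :=
    fun x hx => min'_le _ x hx
  generalize ((A \ B) ∪ (B \ A)).min' hS = m at hm hle
  rcases mem_union.1 hm with h | h
  · exact absurd (hL.2 B hB A hA ⟨m, h, hle⟩) hAL
  · by_cases haB : a ∈ B
    · exact ⟨a, haB, haj⟩
    · exact ⟨m, (mem_sdiff.1 h).1,
        (hle a (mem_union_left _ (mem_sdiff.2 ⟨ha, haB⟩))).trans haj⟩

theorem aux_total (n k : ℕ) (L : Finset (Finset ℕ)) (hL : L ⊆ (Icc 1 n).powersetCard k) :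
    totalInt L = ∑ x ∈ Icc 1 n, (L.filter fun A => x ∈ A).card ^ 2 := by
  unfold totalInt
  have h1 : ∀ A ∈ L, ∀ B ∈ L, (A ∩ B).card =
      ∑ x ∈ Icc 1 n, (if x ∈ A then 1 else 0) * (if x ∈ B then 1 else 0) := by
    intro A hA B _
    have hA' := (mem_powersetCard.1 (hL hA)).1
    rw [← filter_mem_eq_inter, card_filter, ← sum_subset hA']
    · apply sum_congr rfl
      intro x hx
      simp [hx]
    · intro x _ hx
      simp [hx]
  rw [sum_congr rfl fun A hA => sum_congr rfl (h1 A hA)]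
  rw [sum_congr rfl fun A hA => sum_comm, sum_comm]
  apply sum_congr rfl
  intro x _
  rw [sq, card_filter, sum_mul_sum]

theorem aux_sum_s19 (n k r : ℕ) (hr : r ≤ n) :
    (∑ i ∈ Icc 1 r, (n - i).choose k) + (n - r).choose (k + 1) = n.choose (k + 1) := by
  induction r with
  | zero => simp
  | succ r ih =>
    rw [sum_Icc_succ_top (by omega), ← ih (by omega)]
    have : n - r = (n - (r + 1)) + 1 := by omega
    rw [this, Nat.choose_succ_succ']
    omega

theorem aux_deg (n k x : ℕ) (hx : x ∈ Icc 1 n) :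
    (((Icc 1 n).powersetCard (k + 1)).filter fun A => x ∈ A).card = (n - 1).choose k := by
  have h := card_filter_add_card_filter_not (s := (Icc 1 n).powersetCard (k + 1))
    (fun A => x ∈ A)
  have h2 : (((Icc 1 n).powersetCard (k + 1)).filter fun A => ¬ x ∈ A)
      = ((Icc 1 n).erase x).powersetCard (k + 1) := by
    ext A
    simp only [mem_filter, mem_powersetCard, subset_erase]
    tauto
  rw [h2, card_powersetCard, card_powersetCard, card_erase_of_mem hx, Nat.card_Icc] at h
  have hn : n + 1 - 1 = (n - 1) + 1 := by
    have := mem_Icc.1 hx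
    omega
  rw [hn, Nat.choose_succ_succ] at h
  simp only [Nat.add_sub_cancel, Nat.succ_eq_add_one] at h
  omega

theorem stmt19 (k r n : ℕ) (hk : 2 ≤ k) (hn : k + r + 1 ≤ n)
    (δ : ℝ) (hδ : 0 ≤ δ ∧ δ ≤ 1)
    (M : ℕ)
    (hM : (M : ℝ) =
      (∑ i ∈ Icc 1 r, ((n - i).choose (k - 1) : ℝ)) + δ * ((n - (r + 1)).choose (k - 1) : ℝ))
    (L : Finset (Finset ℕ)) (hL : IsLexPrefix n k L) (hLcard : L.card = M) :
    ((r : ℝ) + δ ^ 2) * ((n - 1).choose (k - 1) : ℝ) ^ 2 ≤ (totalInt L : ℝ) := by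
  obtain ⟨k, rfl⟩ : ∃ l, k = l + 1 := ⟨k - 1, by omega⟩
  simp only [Nat.add_sub_cancel] at *
  obtain ⟨hδ0, hδ1⟩ := hδ
  set U := (Icc 1 n).powersetCard (k + 1) with hU
  have hUc : U.card = n.choose (k + 1) := by simp [hU]
  let Q : ℕ → Finset (Finset ℕ) := fun j => (Icc (j + 1) n).powersetCard (k + 1)
  have hQc : ∀ j, (Q j).card = (n - j).choose (k + 1) := by
    intro j
    simp [Q]
  have hQU : ∀ j, Q j ⊆ U := fun j =>
    powersetCard_mono (Icc_subset_Icc (by omega) le_rfl)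
  have hQ : ∀ j, ∀ A ∈ U, A ∉ Q j → ∃ a ∈ A, a ≤ j := by
    intro j A hA hAQ
    by_contra! hcon
    apply hAQ
    have := mem_powersetCard.1 hA
    refine mem_powersetCard.2 ⟨fun x hx => ?_, this.2⟩
    have h1 := mem_Icc.1 (this.1 hx)
    have h2 := hcon x hx
    exact mem_Icc.2 ⟨by omega, h1.2⟩
  have hQ' : ∀ j, ∀ A, ∀ a ∈ A, a ≤ j → A ∉ Q j := by
    intro j A a ha haj hAQ
    have := mem_Icc.1 ((mem_powersetCard.1 hAQ).1 ha)
    omega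
  have hs1 := aux_sum_s19 n k r (by omega)
  have hs2 := aux_sum_s19 n k (r + 1) (by omega)
  rw [sum_Icc_succ_top (by omega)] at hs2
  set c := (n - (r + 1)).choose k with hc
  set N := (n - 1).choose k with hN
  have hcN : c ≤ N := Nat.choose_le_choose _ (by omega)
  set s := ∑ i ∈ Icc 1 r, (n - i).choose k with hs
  have hM' : (M : ℝ) = s + δ * c := by rw [hM, hs]; push_cast; rfl
  have hc0 : (0 : ℝ) ≤ c := Nat.cast_nonneg _
  have hMs : s ≤ M := by
    have : (s : ℝ) ≤ M := by rw [hM']; nlinarith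
    exact_mod_cast this
  have hMs' : M ≤ s + c := by
    have : (M : ℝ) ≤ s + c := by rw [hM']; nlinarith
    exact_mod_cast this
  have hLU : L ⊆ U := hL.1
  have hUQ : ∀ j, (U \ Q j).card = n.choose (k + 1) - (n - j).choose (k + 1) := by
    intro j
    rw [card_sdiff_of_subset (hQU j), hUc, hQc]
  -- lower containment
  have hlow : ∀ A ∈ U, A ∉ Q r → A ∈ L := by
    intro A hA hAQ
    by_contra hAL
    obtain ⟨a, ha, har⟩ := hQ r A hA hAQ
    have hsub : insert A L ⊆ U \ Q r := by
      intro B hB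
      rcases mem_insert.1 hB with rfl | hB
      · exact mem_sdiff.2 ⟨hA, hAQ⟩
      · obtain ⟨b, hb, hbr⟩ := aux_mono hL hA hAL hB ha har
        exact mem_sdiff.2 ⟨hLU hB, hQ' r B b hb hbr⟩
    have := card_le_card hsub
    rw [card_insert_of_notMem hAL, hUQ, hLcard] at this
    omega
  have hup : ∀ B ∈ Q (r + 1), B ∉ L := by
    intro B hBQ hB
    have hsub : insert B (U \ Q (r + 1)) ⊆ L := by
      intro A hA
      rcases mem_insert.1 hA with rfl | hA
      · exact hB
      · by_contra hAL
        obtain ⟨hA, hAQ⟩ := mem_sdiff.1 hA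
        obtain ⟨a, ha, har⟩ := hQ _ A hA hAQ
        obtain ⟨b, hb, hbr⟩ := aux_mono hL hA hAL hB ha har
        exact hQ' _ B b hb hbr hBQ
    have := card_le_card hsub
    rw [card_insert_of_notMem (by simp [hBQ]), hUQ, hLcard] at this
    omega
  have hdeg : ∀ x ∈ Icc 1 r, (L.filter fun A => x ∈ A).card = N := by
    intro x hx
    have hx' := mem_Icc.1 hx
    rw [hN, ← aux_deg n k x (mem_Icc.2 ⟨hx'.1, by omega⟩)]
    congr 1
    ext A
    simp only [mem_filter]
    constructor
    · rintro ⟨h1, h2⟩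
      exact ⟨hLU h1, h2⟩
    · rintro ⟨h1, h2⟩
      exact ⟨hlow A h1 (hQ' r A x h2 hx'.2), h2⟩
  have hdeg2 : N + M ≤ (L.filter fun A => r + 1 ∈ A).card + (s + c) := by
    have hT := aux_deg n k (r + 1) (mem_Icc.2 ⟨by omega, by omega⟩)
    rw [← hU, ← hN] at hT
    have hsub : (U.filter fun A => r + 1 ∈ A) ∪ Q (r + 1) ∪ L ⊆ U :=
      union_subset (union_subset (filter_subset _ _) (hQU _)) hLU
    have h3 : U.filter (fun A => r + 1 ∈ A) ⊆
        (L.filter fun A => r + 1 ∈ A) ∪ ((U \ L) \ Q (r + 1)) := by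
      intro A hA
      obtain ⟨h1, h2⟩ := mem_filter.1 hA
      have := hQ' (r + 1) A (r + 1) h2 le_rfl
      by_cases hAL : A ∈ L
      · exact mem_union_left _ (mem_filter.2 ⟨hAL, h2⟩)
      · exact mem_union_right _ (mem_sdiff.2 ⟨mem_sdiff.2 ⟨h1, hAL⟩, this⟩)
    have h4 := (card_le_card h3).trans (card_union_le _ _)
    have h5 : Q (r + 1) ⊆ U \ L := fun B hB => mem_sdiff.2 ⟨hQU _ hB, hup B hB⟩
    rw [card_sdiff_of_subset h5, card_sdiff_of_subset hLU, hUc, hQc, hT, hLcard] at h4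
    have h6 := card_le_card h5
    rw [card_sdiff_of_subset hLU, hUc, hQc, hLcard] at h6
    omega
  set d := (L.filter fun A => r + 1 ∈ A).card with hd
  have hdR : δ * N ≤ (d : ℝ) := by
    have h1 : (N : ℝ) + M ≤ d + (s + c) := by exact_mod_cast hdeg2
    have h2 : (c : ℝ) ≤ N := by exact_mod_cast hcN
    rw [hM'] at h1
    nlinarith
  have htot : r * N ^ 2 + d ^ 2 ≤ totalInt L := by
    rw [aux_total n (k + 1) L hLU]
    calc r * N ^ 2 + d ^ 2
        = ∑ x ∈ Icc 1 (r + 1), (L.filter fun A => x ∈ A).card ^ 2 := by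
          rw [sum_Icc_succ_top (by omega), sum_congr rfl (fun x hx => by rw [hdeg x hx])]
          simp [hd]
      _ ≤ _ := sum_le_sum_of_subset (Icc_subset_Icc le_rfl (by omega))
  have htotR : (r : ℝ) * N ^ 2 + d ^ 2 ≤ totalInt L := by exact_mod_cast htot
  have hsq : (δ * N) ^ 2 ≤ (d : ℝ) ^ 2 := pow_le_pow_left₀ (by positivity) hdR 2
  nlinarith
end
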